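/- Let G₁ and G₂ be 3-rigid 3-circuits whose intersection consists exactly of one edge e together with its two endpoints, and let G = (G₁ ∪ G₂) − e be their 2-sum. If a graph G' is obtained from G by a 3-dimensional 1-extension, then either G' is minimally 3-rigid (i.e., 3-rigid with exactly 3|V(G')| − 6 edges), or G' is the 2-sum of two 3-rigid 3-circuits. -/

import Mathlib

/-!
The proof works in the 3-dimensional rigidity matroid of a single generic configuration `p` of the
vertices of the extended graph; its elements are all pairs of vertices, represented by the rows of
the rigidity matrix. Three facts put the theorem in this language:

* equilibrium stresses are the row dependencies (`stress_iff_ind`);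
* independence at any configuration implies independence at a generic one, so the matroid does not
  depend on the choice of `p` (`Ind.transfer`, `Cl.transfer`);
* a graph is 3-rigid iff its rows span those of all pairs (`isRigidGraph_iff`). One direction uses
  the averaging identity `row_midpoint`, the other the open mapping argument `exists_near`.

A complete graph on `n ≥ 3` vertices has rank `3 * n - 6` (`finrank_K`), and 1-extensions preserve
independence (`Ind.oneExt`).

Let `G` be the 2-sum of rigid circuits on `S₁` and `S₂` along `ab`, and let the 1-extension delete
an edge `xy` inside `S₁` and add a vertex `z` joined to `x, y, u, v`.

If `u, v ∈ S₁`, then `z` only affects the first circuit, whose 1-extension is again a rigid circuit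
(`RC.oneExt`), so the result is a 2-sum.

Otherwise let `u ∉ S₁`, and let `x` be an end of the deleted edge that is not on `ab`. The set
`J = G - xy + xu` spans, since removing `xy` and `ab` still leaves both sides rigid and `xu` braces
the hinge `ab`. It has exactly `3|V| - 6` edges, hence is independent. The extended graph is a
1-extension of `J` that deletes `xu`, so it is independent with `3(|V| + 1) - 6` edges, and
therefore minimally rigid (`twoSum_oneExt`).
-/

/-!
Common rigidity-theoretic definitions, following the paper
"Computing maximum likelihood thresholds using graph rigidity".
-/

open scoped BigOperators

section Defs

variable {V : Type*}

/-- A configuration in `ℝ^d` is *generic* if the collection of all of its coordinates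
is algebraically independent over `ℚ`. -/
def Generic {d : ℕ} (p : V → EuclideanSpace ℝ (Fin d)) : Prop :=
  AlgebraicIndependent ℚ (fun vi : V × Fin d => p vi.1 vi.2)

/-- `ω` is an equilibrium stress of the framework `(G, p)`: it is symmetric, supported on
the edges of `G`, and satisfies the equilibrium condition at every vertex. -/
def IsEqStress [Fintype V] (G : SimpleGraph V) {d : ℕ}
    (p : V → EuclideanSpace ℝ (Fin d)) (ω : V → V → ℝ) : Prop :=
  (∀ i j, ω i j = ω j i) ∧
  (∀ i j, ¬ G.Adj i j → ω i j = 0) ∧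
  (∀ i, ∑ j, ω i j • (p j - p i) = 0)

/-- The stress matrix associated to a stress `ω`:  off-diagonal entries are `-ω i j`
(which vanish off the edges of the graph) and the diagonal entry at `i` is `∑ k, ω i k`. -/
def stressMatrix [Fintype V] [DecidableEq V] (ω : V → V → ℝ) : Matrix V V ℝ :=
  fun i j => if i = j then ∑ k, ω i k else - ω i j

/-- The maximum likelihood threshold of `G` (via its rigidity-theoretic characterization):
`d + 1` where `d` is the smallest dimension in which no generic framework `(G, p)` supports
a nonzero PSD equilibrium stress. -/
noncomputable def mlt [Fintype V] [DecidableEq V] (G : SimpleGraph V) : ℕ :=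
  sInf {d : ℕ | ∀ p : V → EuclideanSpace ℝ (Fin d), Generic p →
    ∀ ω : V → V → ℝ, IsEqStress G p ω → (stressMatrix ω).PosSemidef → ω = 0} + 1

/-- The generic completion rank of `G`: `d + 1` where `d` is the smallest dimension in
which no generic framework `(G, p)` supports a nonzero equilibrium stress. -/
noncomputable def gcr [Fintype V] (G : SimpleGraph V) : ℕ :=
  sInf {d : ℕ | ∀ p : V → EuclideanSpace ℝ (Fin d), Generic p →
    ∀ ω : V → V → ℝ, IsEqStress G p ω → ω = 0} + 1

/-- Two frameworks `(G, p)` and `(G, q)` are equivalent: corresponding edge lengths agree. -/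
def FrameworkEquiv {d : ℕ} (G : SimpleGraph V) (p q : V → EuclideanSpace ℝ (Fin d)) : Prop :=
  ∀ ⦃u v⦄, G.Adj u v → dist (p u) (p v) = dist (q u) (q v)

/-- Two configurations are congruent: related by a Euclidean isometry of `ℝ^d`. -/
def FrameworkCongruent {d : ℕ} (p q : V → EuclideanSpace ℝ (Fin d)) : Prop :=
  ∃ T : EuclideanSpace ℝ (Fin d) → EuclideanSpace ℝ (Fin d), Isometry T ∧ q = T ∘ p

/-- A framework is globally rigid if every equivalent framework is congruent to it. -/
def GloballyRigidFramework {d : ℕ} (G : SimpleGraph V)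
    (p : V → EuclideanSpace ℝ (Fin d)) : Prop :=
  ∀ q : V → EuclideanSpace ℝ (Fin d), FrameworkEquiv G p q → FrameworkCongruent p q

/-- A framework is rigid if every equivalent framework in some neighborhood of `p`
is congruent to it. -/
def RigidFramework {d : ℕ} (G : SimpleGraph V)
    (p : V → EuclideanSpace ℝ (Fin d)) : Prop :=
  ∃ U ∈ nhds p, ∀ q ∈ U, FrameworkEquiv G p q → FrameworkCongruent p q

/-- A graph is `d`-rigid if every generic framework in `ℝ^d` is rigid. -/
def IsRigidGraph (d : ℕ) (G : SimpleGraph V) : Prop :=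
  ∀ p : V → EuclideanSpace ℝ (Fin d), Generic p → RigidFramework G p

/-- A graph is globally `d`-rigid if every generic framework in `ℝ^d` is globally rigid. -/
def IsGloballyRigidGraph (d : ℕ) (G : SimpleGraph V) : Prop :=
  ∀ p : V → EuclideanSpace ℝ (Fin d), Generic p → GloballyRigidFramework G p

/-- A graph is `d`-independent if the rows of the rigidity matrix `R(G, p)` are linearly
independent for every generic `p`; equivalently (linear dependencies among the rows of
the rigidity matrix are exactly the equilibrium stresses), no generic framework in `ℝ^d`
supports a nonzero equilibrium stress. -/
def IsIndepGraph [Fintype V] (d : ℕ) (G : SimpleGraph V) : Prop :=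
  ∀ p : V → EuclideanSpace ℝ (Fin d), Generic p →
    ∀ ω : V → V → ℝ, IsEqStress G p ω → ω = 0

/-- A graph is a `d`-circuit if it is not `d`-independent but every proper subgraph is. -/
def IsCircuitGraph [Fintype V] (d : ℕ) (G : SimpleGraph V) : Prop :=
  ¬ IsIndepGraph d G ∧ ∀ H : SimpleGraph V, H < G → IsIndepGraph d H

/-- Vertex connectivity at least `k`: more than `k` vertices, and removing any fewer
than `k` vertices leaves a connected graph. -/
def IsKConnected [Fintype V] (k : ℕ) (G : SimpleGraph V) : Prop :=
  k < Fintype.card V ∧ ∀ S : Set V, S.ncard < k → (G.induce Sᶜ).Connected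

/-- `i(X)`: the number of edges of `G` with both endpoints in `X`. -/
noncomputable def edgesWithin (G : SimpleGraph V) (X : Set V) : ℕ :=
  {e ∈ G.edgeSet | ∀ v ∈ e, v ∈ X}.ncard

/-- `d(X, Y)`: the number of edges of `G` with one endpoint in `X \ Y` and the other
in `Y \ X`. -/
noncomputable def crossEdges (G : SimpleGraph V) (X Y : Set V) : ℕ :=
  {e ∈ G.edgeSet | ∃ u ∈ X \ Y, ∃ v ∈ Y \ X, e = s(u, v)}.ncard

/-- `G` is `(3,6)`-sparse. -/
def Sparse36 (G : SimpleGraph V) : Prop :=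
  ∀ X : Set V, 3 ≤ X.ncard → edgesWithin G X ≤ 3 * X.ncard - 6

/-- `X` is 3-critical in `G`. -/
def ThreeCritical (G : SimpleGraph V) (X : Set V) : Prop :=
  3 ≤ X.ncard ∧ edgesWithin G X = 3 * X.ncard - 6

/-- `G'` (on vertex set `Option V`, with new vertex `none`) is a `d`-dimensional
1-extension of `G`: an edge `xy` of `G` is deleted and the new vertex is joined to
`x`, `y` and `d - 1` further vertices. -/
def IsOneExtension [DecidableEq V] (d : ℕ) (G : SimpleGraph V)
    (G' : SimpleGraph (Option V)) : Prop :=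
  ∃ (x y : V) (D : Finset V), G.Adj x y ∧ x ∉ D ∧ y ∉ D ∧ D.card = d - 1 ∧
    (∀ u v : V, G'.Adj (some u) (some v) ↔
      (G.Adj u v ∧ ¬((u = x ∧ v = y) ∨ (u = y ∧ v = x)))) ∧
    (∀ u : V, G'.Adj (some u) none ↔ (u = x ∨ u = y ∨ u ∈ D))

end Defs

/-- `G` is the 2-sum of two 3-rigid 3-circuits: there is a graph `H` which is the union
of two 3-rigid 3-circuits (the subgraphs induced on `S₁` and `S₂`) whose intersection
consists of exactly one edge `xy` together with its endpoints, and `G = H - xy`. -/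
def IsTwoSumOfRigid3Circuits {α : Type*} [Fintype α] [DecidableEq α]
    (G : SimpleGraph α) : Prop :=
  ∃ (H : SimpleGraph α) (S₁ S₂ : Finset α) (x y : α),
    x ≠ y ∧ H.Adj x y ∧ S₁ ∪ S₂ = Finset.univ ∧ S₁ ∩ S₂ = {x, y} ∧
    (∀ u v, H.Adj u v → (u ∈ S₁ ∧ v ∈ S₁) ∨ (u ∈ S₂ ∧ v ∈ S₂)) ∧
    IsRigidGraph 3 (H.induce ↑S₁) ∧ IsCircuitGraph 3 (H.induce ↑S₁) ∧
    IsRigidGraph 3 (H.induce ↑S₂) ∧ IsCircuitGraph 3 (H.induce ↑S₂) ∧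
    G = H.deleteEdges {s(x, y)}

/-! ### Rigidity rows and equilibrium stresses -/

/-- Euclidean 3-space. -/
abbrev E3 := EuclideanSpace ℝ (Fin 3)

section Rows
variable {V : Type*}

/-- The row of the rigidity matrix of `p` attached to an ordered pair `(u, v)`, seen as the
functional `q ↦ ⟪p u - p v, q u - q v⟫` on velocity assignments `q : V → E3`. -/
noncomputable def rowAux (p : V → E3) (u v : V) : (V → E3) →ₗ[ℝ] ℝ :=
  (innerₛₗ ℝ (p u - p v)) ∘ₗ
    (LinearMap.proj (R := ℝ) (φ := fun _ : V => E3) u - LinearMap.proj v)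

lemma rowAux_apply (p : V → E3) (u v : V) (q : V → E3) :
    rowAux p u v q = inner ℝ (p u - p v) (q u - q v) := rfl

lemma rowAux_symm (p : V → E3) (u v : V) : rowAux p u v = rowAux p v u := by
  ext1 q
  rw [rowAux_apply, rowAux_apply, ← inner_neg_neg, neg_sub, neg_sub]

/-- The row of the rigidity matrix of `p` attached to an unordered pair of vertices, as a
functional on velocity assignments. It is defined for all pairs, whether or not they are edges of
a graph; the row of a loop is `0`. -/
noncomputable def row (p : V → E3) : Sym2 V → Module.Dual ℝ (V → E3) :=
  Sym2.lift ⟨rowAux p, rowAux_symm p⟩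

lemma row_mk (p : V → E3) (u v : V) (q : V → E3) :
    row p s(u, v) q = inner ℝ (p u - p v) (q u - q v) := rfl

lemma row_diag (p : V → E3) (u : V) : row p s(u, u) = 0 := by
  ext1 q
  simp [row_mk]

/-- The pair set `F` is independent in the rigidity matroid of `p`: its rows are linearly
independent. -/
def Ind (p : V → E3) (F : Set (Sym2 V)) : Prop := LinearIndepOn ℝ (row p) F

/-- The pair `e` lies in the closure of `F` in the rigidity matroid of `p`: its row is in the span
of the rows of `F`. -/
def Cl (p : V → E3) (F : Set (Sym2 V)) (e : Sym2 V) : Prop :=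
  row p e ∈ Submodule.span ℝ (row p '' F)

lemma Cl.mono {p : V → E3} {F F' : Set (Sym2 V)} (h : F ⊆ F') {e : Sym2 V} (he : Cl p F e) :
    Cl p F' e := Submodule.span_mono (Set.image_mono h) he

lemma Cl.of_mem {p : V → E3} {F : Set (Sym2 V)} {e : Sym2 V} (he : e ∈ F) : Cl p F e :=
  Submodule.subset_span ⟨e, he, rfl⟩

lemma Cl.trans {p : V → E3} {F F' : Set (Sym2 V)} (h : ∀ f ∈ F, Cl p F' f) {e : Sym2 V}
    (he : Cl p F e) : Cl p F' e := by
  refine (Submodule.span_le.2 ?_) he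
  rintro _ ⟨f, hf, rfl⟩
  exact h f hf

lemma ind_insert_iff {p : V → E3} {F : Set (Sym2 V)} {e : Sym2 V} (he : e ∉ F) :
    Ind p (insert e F) ↔ Ind p F ∧ ¬ Cl p F e := linearIndepOn_insert he

lemma exists_basis (p : V → E3) (F : Set (Sym2 V)) :
    ∃ B ⊆ F, Ind p B ∧ ∀ e ∈ F, Cl p B e := by
  obtain ⟨B, hB, -, h1, h2⟩ := exists_linearIndepOn_extension (K := ℝ) (v := row p)
    (linearIndepOn_empty ℝ _) (Set.empty_subset F)
  exact ⟨B, hB, h2, fun e he => h1 ⟨e, he, rfl⟩⟩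

/-- A sum over ordered pairs of a function of the unordered pair that vanishes on loops counts
each unordered pair twice. -/
lemma Sym2.sum_pairs [Fintype V] [DecidableEq V] {f : Sym2 V → ℝ} (hf : ∀ a, f s(a, a) = 0) :
    ∑ a, ∑ b, f s(a, b) = 2 * ∑ e, f e := by
  rw [← Fintype.sum_prod_type' (f := fun a b => f s(a, b)),
    ← Finset.sum_fiberwise Finset.univ (fun x : V × V => s(x.1, x.2)), Finset.mul_sum]
  refine Finset.sum_congr rfl fun e _ => ?_
  induction e using Sym2.ind with
  | _ a b =>
  by_cases hab : a = b
  · subst hab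
    rw [hf, mul_zero]
    refine Finset.sum_eq_zero fun x hx => ?_
    rw [(Finset.mem_filter.1 hx).2, hf]
  · have : (Finset.univ.filter fun x : V × V => s(x.1, x.2) = s(a, b)) = {(a, b), (b, a)} := by
      ext ⟨x, y⟩
      simp
    rw [this, Finset.sum_pair (by simp [hab])]
    rw [Sym2.eq_swap (a := b)]; ring

/-- The equilibrium condition at all vertices, tested against velocities: it says that the
`ω`-weighted sum of rows over all ordered pairs is zero. -/
lemma equilibrium_iff [Fintype V] {p : V → E3} {ω : V → V → ℝ} (hs : ∀ i j, ω i j = ω j i) :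
    (∀ i, ∑ j, ω i j • (p j - p i) = 0) ↔
      ∀ q : V → E3, ∑ a, ∑ b, ω a b * inner ℝ (p a - p b) (q a - q b) = 0 := by
  classical
  have key : ∀ q : V → E3, ∑ a, ∑ b, ω a b * inner ℝ (p a - p b) (q a - q b) =
      -2 * ∑ a, inner ℝ (∑ b, ω a b • (p b - p a)) (q a) := by
    intro q
    have h1 : ∑ a, ∑ b, ω a b * inner ℝ (p a - p b) (q a - q b) =
      ∑ a, ∑ b, ω a b * inner ℝ (p a - p b) (q a) -
      ∑ a, ∑ b, ω a b * inner ℝ (p a - p b) (q b) := by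
      simp only [← Finset.sum_sub_distrib, inner_sub_right, mul_sub]
    have h2 : ∑ a, ∑ b, ω a b * inner ℝ (p a - p b) (q b) =
      - ∑ a, ∑ b, ω a b * inner ℝ (p a - p b) (q a) := by
      rw [Finset.sum_comm]
      simp only [← Finset.sum_neg_distrib]
      refine Finset.sum_congr rfl fun a _ => Finset.sum_congr rfl fun b _ => ?_
      rw [hs b a, ← neg_sub (p a), inner_neg_left]; ring
    have h3 : ∑ a, inner ℝ (∑ b, ω a b • (p b - p a)) (q a) =
      - ∑ a, ∑ b, ω a b * inner ℝ (p a - p b) (q a) := by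
      simp only [← Finset.sum_neg_distrib, sum_inner, inner_smul_left]
      refine Finset.sum_congr rfl fun a _ => Finset.sum_congr rfl fun b _ => ?_
      rw [← neg_sub (p a), inner_neg_left]; simp
    rw [h1, h2, h3]; ring
  constructor
  · intro h q
    rw [key]
    simp [h]
  · intro h i
    have := h (Pi.single i (∑ j, ω i j • (p j - p i)))
    rw [key, Finset.sum_eq_single i] at this
    · simpa using this
    · intro b _ hb
      simp [Pi.single_eq_of_ne hb]
    · simp

/-- Equilibrium stresses are the linear dependencies among the rows of the rigidity matrix. -/
lemma stress_iff_ind [Fintype V] (G : SimpleGraph V) (p : V → E3) :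
    (∀ ω : V → V → ℝ, IsEqStress G p ω → ω = 0) ↔ Ind p G.edgeSet := by
  classical
  have conv : ∀ (g : Sym2 V → ℝ), (∀ q : V → E3,
      ∑ a, ∑ b, g s(a, b) * inner ℝ (p a - p b) (q a - q b) = 0) ↔ ∑ e, g e • row p e = 0 := by
    intro g
    rw [LinearMap.ext_iff]
    refine forall_congr' fun q => ?_
    have := Sym2.sum_pairs (V := V) (f := fun e => g e * row p e q) (by simp [row_diag])
    simp only [row_mk] at this
    rw [this]
    simp [LinearMap.sum_apply]
  constructor
  · intro h
    rw [Ind, linearIndepOn_iff']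
    intro t g ht hg e he
    set g' : Sym2 V → ℝ := fun e => if e ∈ t then g e else 0 with hg'
    have h0 : ∑ e, g' e • row p e = 0 := by
      rw [← hg]
      simp only [hg', ite_smul, zero_smul]
      rw [Finset.sum_ite_mem, Finset.univ_inter]
    have hω := h (fun a b => g' s(a, b)) ⟨fun i j => by simp only [Sym2.eq_swap], ?_, ?_⟩
    · induction e using Sym2.ind with
      | _ a b =>
        have := congr_fun (congr_fun hω a) b
        simpa [hg', he] using this
    · intro i j hij
      have : s(i, j) ∉ t := fun hh => hij (ht hh)
      simp [hg', this]
    · exact (equilibrium_iff (fun i j => by simp only [Sym2.eq_swap])).2 ((conv g').2 h0)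
  · intro h ω hω
    obtain ⟨hs, h0, he⟩ := hω
    rw [equilibrium_iff hs] at he
    have h1 := (conv (Sym2.lift ⟨ω, hs⟩)).1 (by simpa using he)
    rw [Ind, linearIndepOn_iff'] at h
    have hsupp : ∑ e ∈ G.edgeFinset, Sym2.lift ⟨ω, hs⟩ e • row p e = 0 := by
      rw [← h1]
      refine Finset.sum_subset (Finset.subset_univ _) fun e _ hne => ?_
      induction e using Sym2.ind with
      | _ a b =>
        rw [SimpleGraph.mem_edgeFinset, SimpleGraph.mem_edgeSet] at hne
        simp [h0 a b hne]
    ext a b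
    by_cases hab : G.Adj a b
    · have := h G.edgeFinset _ (by simp) hsupp s(a, b) (by simpa using hab)
      simpa using this
    · exact h0 a b hab

lemma isIndepGraph_iff [Fintype V] (G : SimpleGraph V) :
    IsIndepGraph 3 G ↔ ∀ p : V → E3, Generic p → Ind p G.edgeSet :=
  forall₂_congr fun p _ => stress_iff_ind G p

end Rows

/-! ### Genericity -/

section Transfer
variable {V : Type*}

/-- Evaluation, at the configuration `p`, of polynomials in the vertex coordinates. -/
noncomputable def evalConf (p : V → E3) : MvPolynomial (V × Fin 3) ℚ →ₐ[ℚ] ℝ :=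
  MvPolynomial.aeval fun x : V × Fin 3 => p x.1 x.2

/-- If vectors with polynomial entries over `ℚ` are linearly independent at one configuration,
they are so at every generic one: independence is the nonvanishing of the Gram determinant, itself
a polynomial over `ℚ`, and a nonzero such polynomial does not vanish at a generic point. -/
lemma linearIndependent_transfer {ι κ : Type*} [Finite ι] [Finite κ]
    (P : ι → κ → MvPolynomial (V × Fin 3) ℚ) {p q : V → E3} (hp : Generic p)
    (hq : LinearIndependent ℝ fun i k => evalConf q (P i k)) :
    LinearIndependent ℝ fun i k => evalConf p (P i k) := by
  classical
  have := Fintype.ofFinite ι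
  have := Fintype.ofFinite κ
  have key : ∀ r : V → E3, (LinearIndependent ℝ fun i k => evalConf r (P i k)) ↔
      evalConf r (Matrix.of P * (Matrix.of P).transpose).det ≠ 0 := by
    intro r
    rw [← LinearMap.linearIndependent_iff (WithLp.linearEquiv 2 ℝ (κ → ℝ)).symm.toLinearMap
      (LinearEquiv.ker _), ← Matrix.det_gram_ne_zero_iff_linearIndependent]
    have : (evalConf r) (Matrix.of P * (Matrix.of P).transpose).det =
      ((evalConf r).toRingHom.mapMatrix (Matrix.of P * (Matrix.of P).transpose)).det :=
      RingHom.map_det _ _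
    rw [this]
    refine not_congr (Eq.congr (congrArg _ ?_) rfl)
    ext i j
    simp [Matrix.mul_apply, PiLp.inner_apply, mul_comm]
  rw [key] at hq ⊢
  intro h0
  have : (Matrix.of P * (Matrix.of P).transpose).det = 0 :=
    (injective_iff_map_eq_zero _).1 hp _ h0
  rw [this] at hq
  simp at hq

/-- The entries of a functional on velocity assignments, i.e. its values on the standard basis
of `V → E3`. -/
noncomputable def coords (V : Type*) [DecidableEq V] :
    Module.Dual ℝ (V → E3) →ₗ[ℝ] (V × Fin 3 → ℝ) where
  toFun φ x := φ (Pi.single x.1 (EuclideanSpace.single x.2 1))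
  map_add' _ _ := rfl
  map_smul' _ _ := rfl

lemma coords_injective [Finite V] [DecidableEq V] : Function.Injective (coords V) := by
  have := Fintype.ofFinite V
  intro φ ψ h
  refine LinearMap.pi_ext' fun v => ?_
  refine (EuclideanSpace.basisFun (Fin 3) ℝ).toBasis.ext fun i => ?_
  simpa [coords] using congr_fun h (v, i)

/-- The entries of the row of `e` as polynomials in the vertex coordinates. `Quot.out` chooses an
orientation of `e`; reversing it changes the sign of both factors. -/
noncomputable def rowPoly [DecidableEq V] (e : Sym2 V) (x : V × Fin 3) :
    MvPolynomial (V × Fin 3) ℚ :=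
  (MvPolynomial.X ((Quot.out e).1, x.2) - MvPolynomial.X ((Quot.out e).2, x.2)) *
    ((if x.1 = (Quot.out e).1 then 1 else 0) - (if x.1 = (Quot.out e).2 then 1 else 0))

lemma coords_row [DecidableEq V] (p : V → E3) (e : Sym2 V) :
    coords V (row p e) = fun x => evalConf p (rowPoly e x) := by
  ext ⟨v, i⟩
  have he : s((Quot.out e).1, (Quot.out e).2) = e := Quot.out_eq e
  conv_lhs => rw [← he]
  have h : ∀ a : V, inner ℝ (p (Quot.out e).1 - p (Quot.out e).2)
      ((Pi.single v (EuclideanSpace.single i 1) : V → E3) a) =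
      (p (Quot.out e).1 i - p (Quot.out e).2 i) * (if v = a then 1 else 0) := by
    intro a
    by_cases hv : v = a
    · subst hv
      simp [EuclideanSpace.inner_single_right]
    · simp [hv]
  simp only [coords, LinearMap.coe_mk, AddHom.coe_mk, row_mk, rowPoly, inner_sub_right, h]
  simp only [evalConf, map_mul, map_sub, MvPolynomial.aeval_X]
  split_ifs <;> simp

lemma ind_iff_coords [Finite V] [DecidableEq V] (p : V → E3) (F : Set (Sym2 V)) :
    Ind p F ↔ LinearIndependent ℝ fun (e : F) x => evalConf p (rowPoly e.1 x) := by
  rw [Ind, LinearIndepOn, ← LinearMap.linearIndependent_iff (coords V)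
    (LinearMap.ker_eq_bot.2 coords_injective)]
  simp only [Function.comp_def, coords_row]

/-- Independence at any configuration whatsoever implies independence at every generic one. This is
what allows special positions to be used in `Ind.oneExt`. -/
lemma Ind.transfer [Finite V] {p q : V → E3} (hp : Generic p) {F : Set (Sym2 V)}
    (hq : Ind q F) : Ind p F := by
  classical
  rw [ind_iff_coords] at hq ⊢
  exact linearIndependent_transfer (fun (e : F) => rowPoly e.1) hp hq

lemma Ind.eventually [Finite V] {p : V → E3} {F : Set (Sym2 V)} (hp : Ind p F) :
    ∀ᶠ q in nhds p, Ind q F := by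
  classical
  have := Fintype.ofFinite V
  simp only [ind_iff_coords] at hp ⊢
  have hc : Continuous fun (q : V → E3) (e : F) x => evalConf q (rowPoly e.1 x) := by
    refine continuous_pi fun e => continuous_pi fun x => ?_
    simp only [evalConf, rowPoly, map_mul, map_sub, MvPolynomial.aeval_X]
    split_ifs <;> simp <;> fun_prop
  exact hc.continuousAt.eventually (isOpen_setOfPred_linearIndependent.mem_nhds hp)

/-- The rigidity matroids of any two generic configurations agree. -/
lemma Cl.transfer [Finite V] {p q : V → E3} (hp : Generic p) (hq : Generic q)
    {F : Set (Sym2 V)} {e : Sym2 V} (h : Cl q F e) : Cl p F e := by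
  obtain ⟨B, hBF, hB, hcl⟩ := exists_basis q F
  have h1 : Cl q B e := h.trans hcl
  by_cases he : e ∈ B
  · exact Cl.of_mem (hBF he)
  refine Cl.mono hBF ?_
  by_contra hcon
  exact ((ind_insert_iff he).1
    (((ind_insert_iff he).2 ⟨hB.transfer hp, hcon⟩).transfer hq)).2 h1

/-- Four distinct points of a generic configuration are affinely independent. -/
lemma Generic.linearIndependent {p : V → E3} (hp : Generic p) {z a b c : V}
    (ha : a ≠ z) (hb : b ≠ z) (hc : c ≠ z) (hab : a ≠ b) (hac : a ≠ c) (hbc : b ≠ c) :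
    LinearIndependent ℝ ![p a - p z, p b - p z, p c - p z] := by
  classical
  let w : Fin 3 → V := ![a, b, c]
  let P : Fin 3 → Fin 3 → MvPolynomial (V × Fin 3) ℚ := fun i k =>
    MvPolynomial.X (w i, k) - MvPolynomial.X (z, k)
  let q : V → E3 := fun v => if v = a then EuclideanSpace.single 0 1 else
    if v = b then EuclideanSpace.single 1 1 else if v = c then EuclideanSpace.single 2 1 else 0
  have hq : LinearIndependent ℝ fun i k => evalConf q (P i k) := by
    have : (fun i k => evalConf q (P i k)) = (1 : Matrix (Fin 3) (Fin 3) ℝ) := by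
      ext i k
      simp only [evalConf, P, map_sub, MvPolynomial.aeval_X, q, w]
      fin_cases i <;> fin_cases k <;>
        simp [ha.symm, hb.symm, hc.symm, hab.symm, hac.symm, hbc.symm]
    rw [this]
    exact Matrix.linearIndependent_rows_of_isUnit isUnit_one
  have := linearIndependent_transfer P hp hq
  rw [← LinearMap.linearIndependent_iff (WithLp.linearEquiv 2 ℝ (Fin 3 → ℝ)).symm.toLinearMap
      (LinearEquiv.ker _)] at this
  have h2 : ((WithLp.linearEquiv 2 ℝ (Fin 3 → ℝ)).symm.toLinearMap ∘
      fun i k => evalConf p (P i k)) = ![p a - p z, p b - p z, p c - p z] := by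
    ext i k
    simp only [Function.comp_def, evalConf, P, map_sub, MvPolynomial.aeval_X, w]
    fin_cases i <;> simp
  rw [h2] at this
  exact this

/-- Two, respectively three, distinct points of a generic configuration are affinely
independent. These are the cases needed to start the rank computation at a triangle. -/
lemma Generic.linearIndependent' {p : V → E3} (hp : Generic p) {a b c : V}
    (hab : a ≠ b) (hac : a ≠ c) (hbc : b ≠ c) :
    p b - p a ≠ 0 ∧ LinearIndependent ℝ fun i => p (![a, b] i) - p c := by
  classical
  let w : Fin 2 → V := ![a, b]
  let P : Fin 2 → Fin 3 → MvPolynomial (V × Fin 3) ℚ := fun i k =>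
    MvPolynomial.X (w i, k) - MvPolynomial.X (c, k)
  let q : V → E3 := fun v => if v = a then EuclideanSpace.single 0 1 else
    if v = b then EuclideanSpace.single 1 1 else 0
  have hq : LinearIndependent ℝ fun i k => evalConf q (P i k) := by
    have : (fun i k => evalConf q (P i k)) =
        fun i => (1 : Matrix (Fin 3) (Fin 3) ℝ) (Fin.castSucc i) := by
      ext i k
      simp only [evalConf, P, map_sub, MvPolynomial.aeval_X, q, w]
      fin_cases i <;> fin_cases k <;> simp [hab.symm, hac.symm, hbc.symm, Matrix.one_apply]
    rw [this]
    exact (Matrix.linearIndependent_rows_of_isUnit isUnit_one).comp _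
      (Fin.castSucc_injective 2)
  have := linearIndependent_transfer P hp hq
  rw [← LinearMap.linearIndependent_iff (WithLp.linearEquiv 2 ℝ (Fin 3 → ℝ)).symm.toLinearMap
      (LinearEquiv.ker _)] at this
  have h2 : ((WithLp.linearEquiv 2 ℝ (Fin 3 → ℝ)).symm.toLinearMap ∘
      fun i k => evalConf p (P i k)) = fun i => p (![a, b] i) - p c := by
    ext i k
    simp only [Function.comp_def, evalConf, P, map_sub, MvPolynomial.aeval_X, w]
    simp
  rw [h2] at this
  refine ⟨fun h => ?_, this⟩
  have h3 : (0 : Fin 2) = 1 := this.injective (by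
    change p a - p c = p b - p c
    rw [sub_eq_zero.1 h])
  exact absurd h3 (by decide)

lemma Generic.comp {W : Type*} {p : V → E3} (hp : Generic p) {f : W → V}
    (hf : Function.Injective f) : Generic (p ∘ f) := by
  have := AlgebraicIndependent.comp hp (Prod.map f (id : Fin 3 → Fin 3))
    (hf.prodMap Function.injective_id)
  exact this

/-- Generic configurations exist, since `ℝ` has infinite transcendence degree over `ℚ`. -/
lemma exists_generic (V : Type*) [Finite V] : ∃ p : V → E3, Generic p := by
  obtain ⟨s, hs⟩ := exists_isTranscendenceBasis ℚ ℝ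
  have hinf : s.Infinite := by
    intro hfin
    have hc : Cardinal.mk ℝ ≤ Cardinal.aleph0 := by
      have := hfin.to_subtype
      rcases isEmpty_or_nonempty s with hE | hE
      · have : Algebra.IsAlgebraic ℚ ℝ := (hs.isEmpty_iff_isAlgebraic).1 hE
        have := Algebra.IsAlgebraic.cardinalMk_le_max ℚ ℝ
        simpa using this
      · have := hs.lift_cardinalMk_eq_max_lift
        simp only [Cardinal.lift_id] at this
        rw [this]
        simp
    rw [Cardinal.mk_real] at hc
    exact absurd Cardinal.aleph0_lt_continuum (not_lt.2 hc)
  have := hinf.to_subtype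
  obtain ⟨g⟩ : Nonempty (V × Fin 3 ↪ s) := by
    obtain ⟨n, ⟨e⟩⟩ := Finite.exists_equiv_fin (V × Fin 3)
    exact ⟨e.toEmbedding.trans (Fin.valEmbedding.trans (Infinite.natEmbedding s))⟩
  refine ⟨fun v => WithLp.toLp 2 fun i => (g (v, i) : ℝ), ?_⟩
  exact hs.1.comp g g.injective

end Transfer

/-! ### Rigidity equals spanning -/

section RigidIff
variable {V : Type*}

/-- Configurations with the same pairwise distances are congruent: equal Gram matrices give a
linear isometry between the spans, which extends to the whole space. -/
lemma congruent_of_dist_eq [Finite V] {p q : V → E3}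
    (h : ∀ u v, dist (p u) (p v) = dist (q u) (q v)) : FrameworkCongruent p q := by
  have := Fintype.ofFinite V
  rcases isEmpty_or_nonempty V with hV | ⟨⟨o⟩⟩
  · exact ⟨id, isometry_id, Subsingleton.elim _ _⟩
  have hin : ∀ u v, inner ℝ (p u - p o) (p v - p o) = inner ℝ (q u - q o) (q v - q o) := by
    intro u v
    rw [real_inner_eq_norm_mul_self_add_norm_mul_self_sub_norm_sub_mul_self_div_two,
      real_inner_eq_norm_mul_self_add_norm_mul_self_sub_norm_sub_mul_self_div_two,
      sub_sub_sub_cancel_right, sub_sub_sub_cancel_right]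
    simp only [← dist_eq_norm, h]
  let A : (V → ℝ) →ₗ[ℝ] E3 := Fintype.linearCombination ℝ fun v => p v - p o
  let B : (V → ℝ) →ₗ[ℝ] E3 := Fintype.linearCombination ℝ fun v => q v - q o
  have hnorm : ∀ c, ‖A c‖ = ‖B c‖ := by
    intro c
    have h2 : inner ℝ (A c) (A c) = inner ℝ (B c) (B c) := by
      simp only [A, B, Fintype.linearCombination_apply, sum_inner, inner_sum, inner_smul_left,
        inner_smul_right, hin]
    rw [real_inner_self_eq_norm_sq, real_inner_self_eq_norm_sq] at h2
    exact (sq_eq_sq₀ (norm_nonneg _) (norm_nonneg _)).1 h2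
  have hker : LinearMap.ker A ≤ LinearMap.ker B := by
    intro c hc
    rw [LinearMap.mem_ker] at hc ⊢
    rw [← norm_eq_zero, ← hnorm, hc, norm_zero]
  let L0 : LinearMap.range A →ₗ[ℝ] E3 :=
    (LinearMap.ker A).liftQ B hker ∘ₗ A.quotKerEquivRange.symm.toLinearMap
  have hL0 : ∀ c, L0 ⟨A c, c, rfl⟩ = B c := by
    intro c
    have : A.quotKerEquivRange.symm ⟨A c, c, rfl⟩ = (LinearMap.ker A).mkQ c := by
      rw [LinearEquiv.symm_apply_eq]; rfl
    simp only [L0, LinearMap.comp_apply, LinearEquiv.coe_coe, this]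
    rfl
  let L : LinearMap.range A →ₗᵢ[ℝ] E3 := ⟨L0, by
    rintro ⟨_, c, rfl⟩
    rw [hL0, ← hnorm]; rfl⟩
  refine ⟨fun x => L.extend (x - p o) + q o, ?_, ?_⟩
  · intro x y
    simp only [edist_add_right, LinearIsometry.edist_map, edist_sub_right]
  · funext v
    classical
    have hA : A (Pi.single v 1) = p v - p o := by simp [A]
    have hB : B (Pi.single v 1) = q v - q o := by simp [B]
    have := L.extend_apply ⟨A (Pi.single v 1), _, rfl⟩
    have h3 : L ⟨A (Pi.single v 1), _, rfl⟩ = B (Pi.single v 1) := hL0 _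
    rw [h3, hB] at this
    simp only [hA] at this
    simp only [Function.comp_apply, this, sub_add_cancel]

/-- The averaging identity: the row of `uv` at the midpoint of `p` and `q`, applied to `q - p`, is
half the change of the squared length of `uv`. -/
lemma row_midpoint (p q : V → E3) (u v : V) :
    row ((1 / 2 : ℝ) • (p + q)) s(u, v) (q - p) =
      (dist (q u) (q v) ^ 2 - dist (p u) (p v) ^ 2) / 2 := by
  rw [row_mk, dist_eq_norm, dist_eq_norm]
  simp only [← real_inner_self_eq_norm_sq, Pi.smul_apply, Pi.add_apply, Pi.sub_apply]
  have h1 : (1 / 2 : ℝ) • (p u + q u) - (1 / 2 : ℝ) • (p v + q v) =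
      (1 / 2 : ℝ) • ((q u - q v) + (p u - p v)) := by module
  have h2 : q u - p u - (q v - p v) = (q u - q v) - (p u - p v) := by abel
  rw [h1, h2, inner_smul_left, inner_sub_right, inner_add_left, inner_add_left,
    real_inner_comm (p u - p v) (q u - q v)]
  simp; ring

/-- If `q` is close to a generic `p` and has the same lengths as `p` on an independent set `F`, it
has the same lengths on the closure of `F`. The midpoint `m` of `p` and `q` is close to `p`, so `F`
is still independent at `m`, and `F` still has `uv` in its closure at `m` because otherwise
`F ∪ {uv}` would be independent at `m` and hence at the generic `p`. The rows of `F` at `m` kill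
`q - p` by `row_midpoint`, so the row of `uv` does as well. -/
lemma eventually_dist_eq [Finite V] {p : V → E3} (hp : Generic p) {F : Set (Sym2 V)}
    (hF : Ind p F) : ∀ᶠ q in nhds p,
      (∀ u v, s(u, v) ∈ F → dist (p u) (p v) = dist (q u) (q v)) →
      ∀ u v, Cl p F s(u, v) → dist (p u) (p v) = dist (q u) (q v) := by
  have ht : Filter.Tendsto (fun q : V → E3 => (1 / 2 : ℝ) • (p + q)) (nhds p) (nhds p) := by
    have hc : Continuous (fun q : V → E3 => (1 / 2 : ℝ) • (p + q)) := by fun_prop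
    have := hc.tendsto p
    rwa [show (1 / 2 : ℝ) • (p + p) = p by module] at this
  filter_upwards [ht.eventually hF.eventually] with q hq hFq u v huv
  set m := (1 / 2 : ℝ) • (p + q) with hm
  have hcl : Cl m F s(u, v) := by
    by_cases he : s(u, v) ∈ F
    · exact Cl.of_mem he
    by_contra hcon
    exact ((ind_insert_iff he).1 (((ind_insert_iff he).2 ⟨hq, hcon⟩).transfer hp)).2 huv
  have h0 : ∀ e, Cl m F e → row m e (q - p) = 0 := by
    intro e he
    have hle : Submodule.span ℝ (row m '' F) ≤
        LinearMap.ker (Module.Dual.eval ℝ (V → E3) (q - p)) := by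
      rw [Submodule.span_le]
      rintro _ ⟨f, hf, rfl⟩
      induction f using Sym2.ind with
      | _ a b =>
        change row m s(a, b) (q - p) = 0
        rw [hm, row_midpoint, hFq a b hf]; simp
    exact hle he
  have := h0 _ hcl
  rw [hm, row_midpoint] at this
  have h2 : dist (p u) (p v) ^ 2 = dist (q u) (q v) ^ 2 := by linarith
  exact (sq_eq_sq₀ dist_nonneg dist_nonneg).1 h2

lemma rigidFramework_of_cl [Finite V] {G : SimpleGraph V} {p : V → E3} (hp : Generic p)
    (h : ∀ u v, Cl p G.edgeSet s(u, v)) : RigidFramework G p := by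
  obtain ⟨B, hBG, hB, hcl⟩ := exists_basis p G.edgeSet
  refine ⟨_, eventually_dist_eq hp hB, fun q hq hequiv => congruent_of_dist_eq fun u v => ?_⟩
  exact hq (fun a b hab => hequiv (hBG hab)) u v ((h u v).trans hcl)

/-- If `F ∪ {uv}` is independent at `p`, the length of `uv` can be changed by an arbitrarily small
motion that fixes all lengths in `F`: the squared-length map on `F ∪ {uv}` has surjective
derivative at `p`, so it is open there. -/
lemma exists_near [Finite V] {p : V → E3} {F : Set (Sym2 V)} {u v : V}
    (hF : Ind p (insert s(u, v) F)) (hnot : s(u, v) ∉ F) {U : Set (V → E3)} (hU : U ∈ nhds p) :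
    ∃ q ∈ U, (∀ a b, s(a, b) ∈ F → dist (p a) (p b) = dist (q a) (q b)) ∧
      dist (p u) (p v) ≠ dist (q u) (q v) := by
  classical
  have := Fintype.ofFinite V
  set I : Set (Sym2 V) := insert s(u, v) F with hI
  have := Fintype.ofFinite I
  -- The squared length of a pair, as a function on unordered pairs.
  let sq : (V → E3) → Sym2 V → ℝ := fun q => Sym2.lift ⟨fun a b => inner ℝ (q a - q b) (q a - q b),
    fun a b => by
      beta_reduce; rw [← inner_neg_neg, neg_sub]⟩
  let f : (V → E3) → (I → ℝ) := fun q e => sq q e.1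
  let f' : (V → E3) →L[ℝ] (I → ℝ) :=
    ContinuousLinearMap.pi fun e : I => (2 : ℝ) • LinearMap.toContinuousLinearMap (row p e.1)
  have hf' : HasStrictFDerivAt f f' p := by
    rw [hasStrictFDerivAt_pi]
    rintro ⟨e, he⟩
    induction e using Sym2.ind with
    | _ a b =>
      have hd : HasStrictFDerivAt (fun q : V → E3 => q a - q b)
          (ContinuousLinearMap.proj (R := ℝ) (φ := fun _ : V => E3) a -
            ContinuousLinearMap.proj b) p :=
        (ContinuousLinearMap.proj (R := ℝ) (φ := fun _ : V => E3) a -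
            ContinuousLinearMap.proj b).hasStrictFDerivAt
      have := hd.inner ℝ hd
      refine this.congr_fderiv ?_
      ext q
      simp only [ContinuousLinearMap.comp_apply, ContinuousLinearMap.prod_apply,
        fderivInnerCLM_apply]
      change inner ℝ (p a - p b) (q a - q b) + inner ℝ (q a - q b) (p a - p b) =
        (2 : ℝ) * row p s(a, b) q
      rw [row_mk, real_inner_comm (p a - p b)]; ring
  have hsurj : f'.range = ⊤ := by
    by_contra hne
    obtain ⟨g, hg0, hg⟩ := Submodule.exists_le_ker_of_lt_top _ (lt_top_iff_ne_top.2 hne)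
    apply hg0
    rw [Ind, LinearIndepOn, Fintype.linearIndependent_iff] at hF
    have := hF (fun e => g (Pi.single e 1)) (by
      refine LinearMap.ext fun q => ?_
      have h1 : g (f' q) = 0 := hg ⟨q, rfl⟩
      rw [pi_eq_sum_univ' (f' q), map_sum] at h1
      simp only [map_smul, smul_eq_mul] at h1
      have h2 : ∀ e : I, f' q e = 2 * row p e.1 q := fun e => rfl
      simp only [h2] at h1
      simp only [LinearMap.sum_apply, LinearMap.smul_apply, smul_eq_mul, LinearMap.zero_apply]
      have h3 : 2 * ∑ e : I, g (Pi.single e 1) * row p e.1 q = 0 := by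
        rw [← h1, Finset.mul_sum]
        exact Finset.sum_congr rfl fun e _ => by ring
      linarith)
    refine LinearMap.pi_ext' fun e => LinearMap.ext_ring ?_
    simpa using this e
  have hopen := hf'.map_nhds_eq_of_surj hsurj
  let e0 : I := ⟨s(u, v), Set.mem_insert _ _⟩
  have hmem : f '' U ∈ nhds (f p) := by
    rw [← hopen]; exact Filter.image_mem_map hU
  have hcurve : Filter.Tendsto (fun t : ℝ => f p + t • (Pi.single e0 1 : I → ℝ))
      (nhdsWithin 0 {0}ᶜ) (nhds (f p)) := by
    have hc : Continuous (fun t : ℝ => f p + t • (Pi.single e0 1 : I → ℝ)) := by fun_prop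
    have := hc.tendsto 0
    simp only [zero_smul, add_zero] at this
    exact this.mono_left nhdsWithin_le_nhds
  obtain ⟨t, ⟨q, hqU, hq⟩, ht⟩ := ((hcurve.eventually hmem).and self_mem_nhdsWithin).exists
  have hlen : ∀ (r : V → E3) a b, sq r s(a, b) = dist (r a) (r b) ^ 2 := fun r a b => by
    change inner ℝ (r a - r b) (r a - r b) = _
    rw [real_inner_self_eq_norm_sq, dist_eq_norm]
  refine ⟨q, hqU, fun a b hab => ?_, fun hcon => ?_⟩
  · have h1 := congr_fun hq ⟨s(a, b), Set.mem_insert_of_mem _ hab⟩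
    have hne : (⟨s(a, b), Set.mem_insert_of_mem _ hab⟩ : I) ≠ e0 := by
      intro hh
      have hh2 : s(a, b) = s(u, v) := congrArg Subtype.val hh
      exact hnot (hh2 ▸ hab)
    simp only [f, Pi.add_apply, Pi.smul_apply, Pi.single_eq_of_ne hne, smul_zero, add_zero,
      hlen] at h1
    exact ((sq_eq_sq₀ dist_nonneg dist_nonneg).1 h1).symm
  · have h1 := congr_fun hq e0
    simp only [f, e0, Pi.add_apply, Pi.smul_apply, Pi.single_eq_same, smul_eq_mul, mul_one,
      hlen, hcon] at h1
    exact ht (by simpa using h1)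

lemma cl_of_rigidFramework [Finite V] {G : SimpleGraph V} {p : V → E3} (hp : Generic p)
    (h : RigidFramework G p) (u v : V) : Cl p G.edgeSet s(u, v) := by
  obtain ⟨B, hBG, hB, hcl⟩ := exists_basis p G.edgeSet
  obtain ⟨U, hU, hrig⟩ := h
  by_contra hcon
  have hcon' : ¬ Cl p B s(u, v) := fun hh => hcon (hh.mono hBG)
  have hnot : s(u, v) ∉ B := fun hh => hcon' (Cl.of_mem hh)
  obtain ⟨q, ⟨hqU, hq⟩, h1, h2⟩ := exists_near ((ind_insert_iff hnot).2 ⟨hB, hcon'⟩) hnot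
    (Filter.inter_mem hU (eventually_dist_eq hp hB))
  obtain ⟨T, hT, rfl⟩ := hrig q hqU fun a b hab => hq h1 a b (hcl _ hab)
  exact h2 (hT.dist_eq _ _).symm

/-- A graph is 3-rigid iff, at one generic configuration, the rows of its edges span the rows of
all pairs (infinitesimal rigidity). -/
lemma isRigidGraph_iff [Finite V] {p : V → E3} (hp : Generic p) (G : SimpleGraph V) :
    IsRigidGraph 3 G ↔ ∀ u v, Cl p G.edgeSet s(u, v) :=
  ⟨fun h => cl_of_rigidFramework hp (h p hp), fun h _ hq => rigidFramework_of_cl hq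
    fun u v => (h u v).transfer hq hp⟩

end RigidIff

/-! ### Graphs embedded in a larger vertex set -/

section Embed
variable {V W : Type*}

/-- Pullback of functionals along the restriction of velocity assignments on `V` to `W` via `f`,
i.e. extension by zero when `f` is injective. -/
noncomputable def pull (f : W → V) : Module.Dual ℝ (W → E3) →ₗ[ℝ] Module.Dual ℝ (V → E3) :=
  (LinearMap.funLeft ℝ E3 f).dualMap

lemma pull_injective {f : W → V} (hf : Function.Injective f) : Function.Injective (pull f) :=
  LinearMap.dualMap_injective_of_surjective (LinearMap.funLeft_surjective_of_injective ℝ E3 f hf)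

lemma row_map (f : W → V) (p : V → E3) (e : Sym2 W) :
    row p (e.map f) = pull f (row (p ∘ f) e) := by
  induction e using Sym2.ind with
  | _ a b => rfl

lemma ind_map {f : W → V} (hf : Function.Injective f) (p : V → E3) (F : Set (Sym2 W)) :
    Ind p (Sym2.map f '' F) ↔ Ind (p ∘ f) F := by
  have h : row p ∘ Sym2.map f = pull f ∘ row (p ∘ f) := funext fun e => row_map f p e
  have h2 : LinearIndepOn ℝ (row p ∘ Sym2.map f) F ↔ LinearIndepOn ℝ (row (p ∘ f)) F := by
    rw [h]
    exact (pull f).linearIndepOn_iff_of_injOn (pull_injective hf).injOn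
  rw [Ind, Ind, ← h2]
  exact ⟨fun h => h.comp_of_image (Sym2.map.injective hf).injOn,
    fun h => h.image_of_comp _ _⟩

lemma cl_map {f : W → V} (hf : Function.Injective f) (p : V → E3) (F : Set (Sym2 W))
    (e : Sym2 W) : Cl p (Sym2.map f '' F) (e.map f) ↔ Cl (p ∘ f) F e := by
  have h : row p '' (Sym2.map f '' F) = pull f '' (row (p ∘ f) '' F) := by
    simp only [Set.image_image, row_map]
  rw [Cl, Cl, h, row_map, Submodule.span_image, Submodule.mem_map]
  exact ⟨fun ⟨x, hx, hxe⟩ => pull_injective hf hxe ▸ hx, fun h => ⟨_, h, rfl⟩⟩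

/-- For a graph embedded by `f` in a larger vertex set, 3-independence is read off the image edge
set at one generic configuration of the larger set. -/
lemma isIndepGraph_iff_map [Fintype W] {f : W → V} (hf : Function.Injective f) {p : V → E3}
    (hp : Generic p) (G : SimpleGraph W) :
    IsIndepGraph 3 G ↔ Ind p (Sym2.map f '' G.edgeSet) := by
  rw [isIndepGraph_iff, ind_map hf]
  exact ⟨fun h => h _ (hp.comp hf), fun h q hq => h.transfer hq⟩

/-- For a graph embedded by `f` in a larger vertex set, 3-rigidity is read off the image edge set at
one generic configuration of the larger set. -/
lemma isRigidGraph_iff_map [Finite W] {f : W → V} (hf : Function.Injective f) {p : V → E3}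
    (hp : Generic p) (G : SimpleGraph W) :
    IsRigidGraph 3 G ↔ ∀ u v, Cl p (Sym2.map f '' G.edgeSet) s(f u, f v) := by
  rw [isRigidGraph_iff (hp.comp hf)]
  exact forall₂_congr fun u v => (cl_map hf p _ s(u, v)).symm

/-- An embedded graph is a 3-circuit iff its image edge set is dependent at one generic
configuration and becomes independent whenever a single edge is removed. -/
lemma isCircuitGraph_iff_map [Fintype W] {f : W → V} (hf : Function.Injective f) {p : V → E3}
    (hp : Generic p) (G : SimpleGraph W) :
    IsCircuitGraph 3 G ↔ ¬ Ind p (Sym2.map f '' G.edgeSet) ∧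
      ∀ e ∈ Sym2.map f '' G.edgeSet, Ind p (Sym2.map f '' G.edgeSet \ {e}) := by
  rw [IsCircuitGraph, isIndepGraph_iff_map hf hp]
  refine and_congr_right fun _ => ⟨?_, ?_⟩
  · rintro h _ ⟨e, he, rfl⟩
    have h1 := (isIndepGraph_iff_map hf hp _).1 (h (G.deleteEdges {e}) (by
      refine lt_of_le_of_ne (G.deleteEdges_le _) fun hh => ?_
      rw [← hh] at he
      simp at he))
    rw [SimpleGraph.edgeSet_deleteEdges, Set.image_sdiff (Sym2.map.injective hf),
      Set.image_singleton] at h1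
    exact h1
  · intro h H hH
    rw [isIndepGraph_iff_map hf hp]
    obtain ⟨e, he, heH⟩ := Set.exists_of_ssubset (SimpleGraph.edgeSet_ssubset_edgeSet.2 hH)
    refine LinearIndepOn.mono (h _ ⟨e, he, rfl⟩) ?_
    rintro _ ⟨e', he', rfl⟩
    refine ⟨⟨e', SimpleGraph.edgeSet_mono hH.le he', rfl⟩, fun hh => heH ?_⟩
    rw [← Sym2.map.injective hf hh]
    exact he'

end Embed

/-! ### 0-extensions and the rank of complete graphs -/

section Matroid
variable {V : Type*}

lemma LinearIndepOn.range_of_comp {ι : Type*} {f : Sym2 V → Module.Dual ℝ (V → E3)}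
    {w : ι → Sym2 V} (h : LinearIndependent ℝ (f ∘ w)) : LinearIndepOn ℝ f (Set.range w) := by
  rw [← Set.image_univ]
  exact LinearIndepOn.image_of_comp _ _ (linearIndepOn_univ_iff.2 h)

/-- 0-extension: joining a vertex `z` that meets no pair of `A` to vertices whose directions from
`z` are linearly independent preserves independence. On velocities supported at `z` the rows of
`A` vanish while the new rows stay independent. -/
lemma zeroExt {p : V → E3} {A : Set (Sym2 V)} {z : V} (hA : Ind p A) (hz : ∀ e ∈ A, z ∉ e)
    {ι : Type*} {w : ι → V} (hwz : ∀ i, w i ≠ z)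
    (hw : LinearIndependent ℝ fun i => p (w i) - p z) :
    Ind p (A ∪ Set.range fun i => s(z, w i)) := by
  classical
  let T : Module.Dual ℝ (V → E3) →ₗ[ℝ] Module.Dual ℝ E3 :=
    (LinearMap.single ℝ (fun _ : V => E3) z).dualMap
  have hT : ∀ e ∈ A, T (row p e) = 0 := by
    intro e he
    have := hz e he
    induction e using Sym2.ind with
    | _ a b =>
      rw [Sym2.mem_iff, not_or] at this
      refine LinearMap.ext fun x => ?_
      change inner ℝ (p a - p b) ((Pi.single z x : V → E3) a - (Pi.single z x : V → E3) b) = 0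
      rw [Pi.single_eq_of_ne (Ne.symm this.1), Pi.single_eq_of_ne (Ne.symm this.2)]
      simp
  have hTw : (T ∘ row p ∘ fun i => s(z, w i)) = (-innerₛₗ ℝ) ∘ fun i => p (w i) - p z := by
    funext i
    refine LinearMap.ext fun x => ?_
    change inner ℝ (p z - p (w i)) ((Pi.single z x : V → E3) z - (Pi.single z x : V → E3) (w i)) =
      -inner ℝ (p (w i) - p z) x
    rw [Pi.single_eq_same, Pi.single_eq_of_ne (hwz i), ← inner_neg_left]
    simp
  have hli : LinearIndependent ℝ (T ∘ row p ∘ fun i => s(z, w i)) := by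
    rw [hTw]
    refine hw.map' _ (LinearMap.ker_eq_bot'.2 fun x hx => ?_)
    have := LinearMap.congr_fun hx x
    simpa using this
  have hli2 : LinearIndependent ℝ (row p ∘ fun i => s(z, w i)) := LinearIndependent.of_comp T hli
  refine LinearIndepOn.union hA (LinearIndepOn.range_of_comp hli2) ?_
  rw [← Set.range_comp]
  have hle : Submodule.span ℝ (row p '' A) ≤ LinearMap.ker T := by
    rw [Submodule.span_le]
    rintro _ ⟨e, he, rfl⟩
    exact hT e he
  exact Disjoint.mono_left hle (Submodule.range_ker_disjoint hli).symm

/-- In generic position, `zv` is in the closure of the other nine pairs of the `K₅` on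
`z, v, a, b, c`. Writing `p v - p a` in the basis `p b - p a`, `p c - p a`, `p z - p a` with
coefficients `t 0`, `t 1`, `t 2`, the affine dependency of the five points has coefficients
`λ_v = -1`, `λ_b = t 0`, `λ_c = t 1`, `λ_z = t 2`, `λ_a = 1 - t 0 - t 1 - t 2`, and the equilibrium
stress used is `ω_{ij} = λ_i λ_j`. -/
lemma cl_of_K5 {p : V → E3} (hp : Generic p) {F : Set (Sym2 V)} {z v a b c : V}
    (hza : z ≠ a) (hzb : z ≠ b) (hzc : z ≠ c) (hva : v ≠ a) (hvb : v ≠ b)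
    (hvc : v ≠ c) (hab : a ≠ b) (hac : a ≠ c) (hbc : b ≠ c)
    (za : Cl p F s(z, a)) (zb : Cl p F s(z, b)) (zc : Cl p F s(z, c))
    (va : Cl p F s(v, a)) (vb : Cl p F s(v, b)) (vc : Cl p F s(v, c))
    (ab : Cl p F s(a, b)) (ac : Cl p F s(a, c)) (bc : Cl p F s(b, c)) : Cl p F s(z, v) := by
  have h1 := hp.linearIndependent (z := a) hab.symm hac.symm hza hbc hzb.symm hzc.symm
  have h2 := hp.linearIndependent (z := a) hva hab.symm hac.symm hvb hvc hbc
  have hspan := h1.span_eq_top_of_card_eq_finrank (by simp)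
  have hmem : p v - p a ∈ Submodule.span ℝ (Set.range ![p b - p a, p c - p a, p z - p a]) := by
    rw [hspan]; trivial
  rw [Submodule.mem_span_range_iff_exists_fun] at hmem
  obtain ⟨t, ht⟩ := hmem
  simp only [Fin.sum_univ_three, Matrix.cons_val_zero, Matrix.cons_val_one, Matrix.cons_val] at ht
  have ht2 : t 2 ≠ 0 := by
    intro h0
    rw [h0, zero_smul, add_zero] at ht
    rw [Fintype.linearIndependent_iff] at h2
    have := h2 ![1, -t 0, -t 1] (by
      simp only [Fin.sum_univ_three, Matrix.cons_val_zero, Matrix.cons_val_one, Matrix.cons_val]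
      rw [← ht]; module) 0
    simp at this
  have key : row p s(z, v) = (t 2)⁻¹ • (
      (-t 2 * (t 0 + t 1 + t 2 - 1)) • row p s(z, a) + (t 2 * t 0) • row p s(z, b)
      + (t 2 * t 1) • row p s(z, c) + (t 0 + t 1 + t 2 - 1) • row p s(v, a)
      + (-t 0) • row p s(v, b) + (-t 1) • row p s(v, c)
      + (-t 0 * (t 0 + t 1 + t 2 - 1)) • row p s(a, b)
      + (-t 1 * (t 0 + t 1 + t 2 - 1)) • row p s(a, c) + (t 0 * t 1) • row p s(b, c)) := by
    rw [eq_inv_smul_iff₀ ht2]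
    refine LinearMap.ext fun q => ?_
    simp only [LinearMap.add_apply, LinearMap.smul_apply, row_mk, smul_eq_mul]
    have e : ∀ (r : V → E3) (x y : V), r x - r y = (r x - r a) - (r y - r a) := by
      intro r x y; abel
    rw [e p z v, e q z v, e p z b, e q z b, e p z c, e q z c, e p v b, e q v b, e p v c, e q v c,
      e p b c, e q b c, ← neg_sub (p b) (p a), ← neg_sub (q b) (q a), ← neg_sub (p c) (p a),
      ← neg_sub (q c) (q a), ← ht]
    simp only [inner_sub_left, inner_sub_right, inner_add_left, inner_smul_left, inner_neg_left,
      inner_neg_right, conj_trivial]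
    ring
  rw [Cl, key]
  refine Submodule.smul_mem _ _ ?_
  refine Submodule.add_mem _ (Submodule.add_mem _ (Submodule.add_mem _ (Submodule.add_mem _
    (Submodule.add_mem _ (Submodule.add_mem _ (Submodule.add_mem _ (Submodule.add_mem _
    ?_ ?_) ?_) ?_) ?_) ?_) ?_) ?_) ?_ <;> exact Submodule.smul_mem _ _ ‹_›

lemma Cl.diag (p : V → E3) (F : Set (Sym2 V)) (u : V) : Cl p F s(u, u) := by
  rw [Cl, row_diag]; exact Submodule.zero_mem _

lemma Cl.swap {p : V → E3} {F : Set (Sym2 V)} {u v : V} (h : Cl p F s(u, v)) :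
    Cl p F s(v, u) := by rwa [Sym2.eq_swap]

/-- The pair set `F` spans the complete graph on `S` in the rigidity matroid of `p`. -/
def Spans (p : V → E3) (F : Set (Sym2 V)) (S : Set V) : Prop :=
  ∀ u ∈ S, ∀ v ∈ S, Cl p F s(u, v)

lemma Spans.mono {p : V → E3} {F F' : Set (Sym2 V)} {S : Set V} (h : Spans p F S) (hF : F ⊆ F') :
    Spans p F' S := fun u hu v hv => (h u hu v hv).mono hF

/-- Attaching a vertex by three pairs to distinct vertices of a spanned set gives a spanned set. -/
lemma Spans.insert {p : V → E3} (hp : Generic p) {F : Set (Sym2 V)} {S : Set V}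
    (h : Spans p F S) {z a b c : V} (ha : a ∈ S) (hb : b ∈ S) (hc : c ∈ S)
    (hab : a ≠ b) (hac : a ≠ c) (hbc : b ≠ c)
    (za : Cl p F s(z, a)) (zb : Cl p F s(z, b)) (zc : Cl p F s(z, c)) :
    Spans p F (insert z S) := by
  by_cases hz : z ∈ S
  · rwa [Set.insert_eq_of_mem hz]
  have key : ∀ v ∈ S, Cl p F s(z, v) := by
    intro v hv
    by_cases hva : v = a
    · rwa [hva]
    by_cases hvb : v = b
    · rwa [hvb]
    by_cases hvc : v = c
    · rwa [hvc]
    have hne : ∀ u ∈ S, z ≠ u := fun u hu hh => hz (hh ▸ hu)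
    exact cl_of_K5 hp (hne a ha) (hne b hb) (hne c hc) hva hvb hvc hab hac hbc za zb zc
      (h v hv a ha) (h v hv b hb) (h v hv c hc) (h a ha b hb) (h a ha c hc) (h b hb c hc)
  rintro u (rfl | hu) v (rfl | hv)
  · exact Cl.diag _ _ _
  · exact key v hv
  · exact (key u hu).swap
  · exact h u hu v hv

/-- All pairs with both ends in `S`, loops included. -/
def K (S : Set V) : Set (Sym2 V) := {e | ∀ v ∈ e, v ∈ S}

lemma mk_mem_K {S : Set V} {u v : V} : s(u, v) ∈ K S ↔ u ∈ S ∧ v ∈ S := by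
  simp [K, Sym2.mem_iff]

lemma K_mono {S T : Set V} (h : S ⊆ T) : K S ⊆ K T := fun _ he v hv => h (he v hv)

/-- The complete graph on `n ≥ 3` vertices has a basis with `3 * n - 6` edges, built from a triangle by
0-extensions. -/
lemma exists_basis_K {p : V → E3} (hp : Generic p) (n : ℕ) (hn : 3 ≤ n) :
    ∀ S : Finset V, S.card = n → ∃ I ⊆ K (S : Set V), I.Finite ∧ Ind p I ∧
      I.ncard + 6 = 3 * S.card ∧ Spans p I S := by
  classical
  induction n, hn using Nat.le_induction with
  | base =>
    intro S hS
    obtain ⟨a, b, c, hab, hac, hbc, rfl⟩ := Finset.card_eq_three.1 hS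
    have h2 := hp.linearIndependent' hab hac hbc
    have i0 : Ind p (∅ : Set (Sym2 V)) := linearIndepOn_empty _ _
    have i1 := zeroExt (z := a) (w := fun _ : Unit => b) i0 (by simp) (fun _ => hab.symm)
      (by
        refine LinearIndependent.of_subsingleton (i := ()) ?_
        exact h2.1)
    have i2 := zeroExt (z := c) (w := ![a, b]) i1 (by
      intro e he
      simp only [Set.range_const, Set.empty_union, Set.mem_singleton_iff] at he
      subst he
      simp [hac.symm, hbc.symm]) (by
      intro i; fin_cases i <;> simp [hac, hbc]) h2.2
    have hset : (∅ ∪ Set.range fun _ : Unit => s(a, b)) ∪ Set.range (fun i => s(c, ![a, b] i)) =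
        (({s(a, b), s(c, a), s(c, b)} : Finset (Sym2 V)) : Set (Sym2 V)) := by
      ext e
      simp [Set.mem_range, Fin.exists_fin_two, eq_comm]
    rw [hset] at i2
    refine ⟨_, ?_, Finset.finite_toSet _, i2, ?_, ?_⟩
    · intro e he
      simp only [Finset.coe_insert, Finset.coe_singleton, Set.mem_insert_iff,
        Set.mem_singleton_iff] at he
      rcases he with rfl | rfl | rfl <;> rw [mk_mem_K] <;> simp
    · rw [Set.ncard_coe_finset, hS, Finset.card_eq_three.2]
      refine ⟨_, _, _, ?_, ?_, ?_, rfl⟩ <;>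
        simp [hab, hac, hbc, hab.symm, hbc.symm]
    · have hm : ∀ e ∈ ({s(a, b), s(c, a), s(c, b)} : Finset (Sym2 V)), Cl p
        (({s(a, b), s(c, a), s(c, b)} : Finset (Sym2 V)) : Set (Sym2 V)) e :=
        fun e he => Cl.of_mem he
      intro u hu v hv
      have hab' := hm s(a, b) (by simp)
      have hca' := hm s(c, a) (by simp)
      have hcb' := hm s(c, b) (by simp)
      simp only [Finset.coe_insert, Finset.coe_singleton, Set.mem_insert_iff,
        Set.mem_singleton_iff] at hu hv
      rcases hu with rfl | rfl | rfl <;> rcases hv with rfl | rfl | rfl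
      exacts [Cl.diag _ _ _, hab', hca'.swap, hab'.swap, Cl.diag _ _ _, hcb'.swap, hca', hcb',
        Cl.diag _ _ _]
  | succ n hn ih =>
    intro S hS
    obtain ⟨z, S', hz, rfl, hS'⟩ := Finset.card_eq_succ.1 hS
    obtain ⟨I, hIK, hfin, hI, hcard, hsp⟩ := ih S' hS'
    obtain ⟨T, hTS, hT⟩ := Finset.exists_subset_card_eq (hS'.symm ▸ hn)
    obtain ⟨a, b, c, hab, hac, hbc, rfl⟩ := Finset.card_eq_three.1 hT
    have ha : a ∈ S' := hTS (by simp)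
    have hb : b ∈ S' := hTS (by simp)
    have hc : c ∈ S' := hTS (by simp)
    have hne : ∀ u ∈ S', u ≠ z := fun u hu hh => hz (hh ▸ hu)
    have hzI : ∀ e ∈ I, z ∉ e := fun e he hze => hz (hIK he z hze)
    have i1 := zeroExt (z := z) (w := ![a, b, c]) hI hzI (by
      intro i; fin_cases i
      exacts [hne a ha, hne b hb, hne c hc])
      (by
        have := hp.linearIndependent (hne a ha) (hne b hb) (hne c hc) hab hac hbc
        have h2 : (fun i => p (![a, b, c] i) - p z) = ![p a - p z, p b - p z, p c - p z] := by
          funext i; fin_cases i <;> rfl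
        rw [h2]
        exact this)
    have hset : (Set.range fun i => s(z, ![a, b, c] i)) =
        (({s(z, a), s(z, b), s(z, c)} : Finset (Sym2 V)) : Set (Sym2 V)) := by
      ext e
      simp [Set.mem_range, Fin.exists_fin_succ, eq_comm]
    rw [hset] at i1
    have hdisj : Disjoint I (({s(z, a), s(z, b), s(z, c)} : Finset (Sym2 V)) : Set (Sym2 V)) := by
      rw [Set.disjoint_right]
      intro e he heI
      refine hzI e heI ?_
      simp only [Finset.coe_insert, Finset.coe_singleton, Set.mem_insert_iff,
        Set.mem_singleton_iff] at he
      rcases he with rfl | rfl | rfl <;> simp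
    have hsub : I ⊆ I ∪ (({s(z, a), s(z, b), s(z, c)} : Finset (Sym2 V)) : Set (Sym2 V)) :=
      Set.subset_union_left
    refine ⟨_, ?_, hfin.union (Finset.finite_toSet _), i1, ?_, ?_⟩
    · refine Set.union_subset (hIK.trans (K_mono (by simp))) ?_
      intro e he
      simp only [Finset.coe_insert, Finset.coe_singleton, Set.mem_insert_iff,
        Set.mem_singleton_iff] at he
      rcases he with rfl | rfl | rfl <;> rw [mk_mem_K] <;> simp [ha, hb, hc]
    · have h3 : ({s(z, a), s(z, b), s(z, c)} : Finset (Sym2 V)).card = 3 :=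
        Finset.card_eq_three.2 ⟨_, _, _, by simp [hab, hne a ha],
          by simp [hac, hne a ha], by simp [hbc, hne b hb], rfl⟩
      rw [Set.ncard_union_eq hdisj hfin (Finset.finite_toSet _), Set.ncard_coe_finset, h3,
        Finset.card_insert_of_notMem hz]
      omega
    · rw [show ((insert z S' : Finset V) : Set V) = insert z (S' : Set V) from
        Finset.coe_insert _ _]
      exact (hsp.mono hsub).insert (z := z) hp (Finset.mem_coe.2 ha) (Finset.mem_coe.2 hb)
        (Finset.mem_coe.2 hc) hab hac hbc
        (Cl.of_mem (by simp)) (Cl.of_mem (by simp)) (Cl.of_mem (by simp))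

lemma Ind.finrank [Finite V] {p : V → E3} {F : Set (Sym2 V)} (h : Ind p F) :
    Module.finrank ℝ (Submodule.span ℝ (row p '' F)) = F.ncard := by
  have := Fintype.ofFinite F
  have h1 := finrank_span_eq_card h
  rw [← Set.image_eq_range] at h1
  rw [h1, ← Nat.card_eq_fintype_card]
  rfl

lemma span_eq_of_spans {p : V → E3} {F : Set (Sym2 V)} {S : Set V} (hF : F ⊆ K S)
    (h : Spans p F S) : Submodule.span ℝ (row p '' F) = Submodule.span ℝ (row p '' K S) := by
  refine le_antisymm (Submodule.span_mono (Set.image_mono hF)) ?_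
  rw [Submodule.span_le]
  rintro _ ⟨e, he, rfl⟩
  induction e using Sym2.ind with
  | _ a b =>
    rw [mk_mem_K] at he
    exact h a he.1 b he.2

/-- The complete graph on `S` has rank `3|S| - 6` (in additive form, to avoid truncated
subtraction). -/
lemma finrank_K [Finite V] {p : V → E3} (hp : Generic p) {S : Finset V} (hS : 3 ≤ S.card) :
    Module.finrank ℝ (Submodule.span ℝ (row p '' K (S : Set V))) + 6 = 3 * S.card := by
  obtain ⟨I, hIK, -, hI, hcard, hsp⟩ := exists_basis_K hp _ hS S rfl
  rw [← span_eq_of_spans hIK hsp, hI.finrank, hcard]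

lemma ncard_of_ind_spans [Finite V] {p : V → E3} (hp : Generic p) {S : Finset V} (hS : 3 ≤ S.card)
    {F : Set (Sym2 V)} (hF : F ⊆ K (S : Set V)) (hI : Ind p F) (h : Spans p F S) :
    F.ncard + 6 = 3 * S.card := by
  rw [← finrank_K hp hS, ← span_eq_of_spans hF h, hI.finrank]

lemma spans_of_ind_ncard [Finite V] {p : V → E3} (hp : Generic p) {S : Finset V} (hS : 3 ≤ S.card)
    {F : Set (Sym2 V)} (hF : F ⊆ K (S : Set V)) (hI : Ind p F) (h : F.ncard + 6 = 3 * S.card) :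
    Spans p F S := by
  have := finrank_K hp hS
  have h2 := Submodule.eq_of_le_of_finrank_eq
    (Submodule.span_mono (R := ℝ) (Set.image_mono (f := row p) hF)) (by rw [hI.finrank]; omega)
  intro u hu v hv
  rw [Cl, h2]
  exact Submodule.subset_span ⟨_, mk_mem_K.2 ⟨hu, hv⟩, rfl⟩

lemma ind_of_spans_ncard [Finite V] {p : V → E3} (hp : Generic p) {S : Finset V} (hS : 3 ≤ S.card)
    {F : Set (Sym2 V)} (hF : F ⊆ K (S : Set V)) (h : Spans p F S)
    (hc : F.ncard + 6 ≤ 3 * S.card) : Ind p F := by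
  have := Fintype.ofFinite F
  rw [Ind, LinearIndepOn, linearIndependent_iff_card_le_finrank_span, Set.finrank,
    ← Set.image_eq_range, span_eq_of_spans hF h, ← Nat.card_eq_fintype_card]
  have := finrank_K hp hS
  change F.ncard ≤ _
  omega

end Matroid

/-! ### 1-extensions, rigid circuits and 2-sums -/

section OneExt
variable {V : Type*}

lemma row_congr {p q : V → E3} {e : Sym2 V} (h : ∀ w ∈ e, p w = q w) : row p e = row q e := by
  induction e using Sym2.ind with
  | _ a b =>
    refine LinearMap.ext fun δ => ?_
    rw [row_mk, row_mk, h a (by simp), h b (by simp)]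

lemma Ind.zeroExt3 {p : V → E3} (hp : Generic p) {A : Set (Sym2 V)} {z a b c : V} (hA : Ind p A)
    (hz : ∀ e ∈ A, z ∉ e) (ha : a ≠ z) (hb : b ≠ z) (hc : c ≠ z) (hab : a ≠ b) (hac : a ≠ c)
    (hbc : b ≠ c) : Ind p (A ∪ {s(z, a), s(z, b), s(z, c)}) := by
  have h1 := zeroExt (z := z) (w := ![a, b, c]) hA hz (by
      intro i; fin_cases i
      exacts [ha, hb, hc])
      (by
        have := hp.linearIndependent ha hb hc hab hac hbc
        have h2 : (fun i => p (![a, b, c] i) - p z) = ![p a - p z, p b - p z, p c - p z] := by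
          funext i; fin_cases i <;> rfl
        rw [h2]
        exact this)
  refine LinearIndepOn.mono h1 (Set.union_subset_union_right _ ?_)
  rintro e (rfl | rfl | rfl)
  exacts [⟨0, rfl⟩, ⟨1, rfl⟩, ⟨2, rfl⟩]

/-- 1-extension preserves independence: replace the pair `xu` by a new vertex `z` joined to
`x, u, y, v`. Put `z` at the midpoint of `x` and `u`. There the 0-extension by `zx, zy, zv` keeps
`A ∪ {xu}` independent, and the row of `xu` is `2 (row zu + row zx)`, so `xu` can be exchanged for
`zu`. Independence then transfers to the generic configuration. -/
lemma Ind.oneExt [Finite V] {p : V → E3} (hp : Generic p) {A : Set (Sym2 V)} {z x u y v : V}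
    (hz : ∀ e ∈ A, z ∉ e) (hx : x ≠ z) (hu : u ≠ z) (hy : y ≠ z) (hv : v ≠ z)
    (hxu : x ≠ u) (hxy : x ≠ y) (hxv : x ≠ v) (huy : u ≠ y) (huv : u ≠ v) (hyv : y ≠ v)
    (hnot : s(x, u) ∉ A) (hI : Ind p (insert s(x, u) A)) :
    Ind p (A ∪ {s(z, x), s(z, u), s(z, y), s(z, v)}) := by
  classical
  set q : V → E3 := Function.update p z ((1 / 2 : ℝ) • (p x + p u)) with hq
  have hqz : q z = (1 / 2 : ℝ) • (p x + p u) := Function.update_self ..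
  have hqne : ∀ w, w ≠ z → q w = p w := fun w hw => Function.update_of_ne hw ..
  have hz' : ∀ e ∈ insert s(x, u) A, z ∉ e := by
    rintro e (rfl | he)
    · simp [hx.symm, hu.symm]
    · exact hz e he
  have hIq : Ind q (insert s(x, u) A) := by
    refine LinearIndepOn.congr hI fun e he => ?_
    refine row_congr fun w hw => (hqne w ?_).symm
    rintro rfl
    exact hz' e he hw
  have hli : LinearIndependent ℝ fun i => q (![x, y, v] i) - q z := by
    have h1 := hp.linearIndependent (z := u) hxu huy.symm huv.symm hxy hxv hyv
    rw [Fintype.linearIndependent_iff] at h1 ⊢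
    intro g hg
    simp only [Fin.sum_univ_three, Matrix.cons_val_zero, Matrix.cons_val_one, Matrix.cons_val,
      hqz, hqne x hx, hqne y hy, hqne v hv] at hg
    have h2 := h1 ![(g 0 - g 1 - g 2) / 2, g 1, g 2] (by
      simp only [Fin.sum_univ_three, Matrix.cons_val_zero, Matrix.cons_val_one, Matrix.cons_val]
      rw [← hg]
      module)
    have e0 : (g 0 - g 1 - g 2) / 2 = 0 := h2 0
    have e1 : g 1 = 0 := h2 1
    have e2 : g 2 = 0 := h2 2
    intro i
    fin_cases i
    · change g 0 = 0
      linarith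
    · exact e1
    · exact e2
  have h3 := zeroExt (z := z) (w := ![x, y, v]) hIq hz' (by
      intro i; fin_cases i
      exacts [hx, hy, hv]) hli
  set B : Set (Sym2 V) := A ∪ Set.range fun i => s(z, ![x, y, v] i) with hB
  rw [Set.insert_union] at h3
  have hnotB : s(x, u) ∉ B := by
    rintro (h | ⟨i, hi⟩)
    · exact hnot h
    · have : z ∈ s(x, u) := by
        rw [← hi]; exact Sym2.mem_mk_left _ _
      simp [hx.symm, hu.symm] at this
  obtain ⟨hBind, hBcl⟩ := (ind_insert_iff hnotB).1 h3
  have hzxB : Cl q B s(z, x) := Cl.of_mem (Or.inr ⟨0, rfl⟩)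
  have hncl : ¬ Cl q B s(z, u) := by
    intro hcl
    apply hBcl
    have hrow : row q s(x, u) = (2 : ℝ) • row q s(z, u) + (2 : ℝ) • row q s(z, x) := by
      refine LinearMap.ext fun δ => ?_
      simp only [LinearMap.add_apply, LinearMap.smul_apply, row_mk, smul_eq_mul, hqz, hqne x hx,
        hqne u hu]
      have h1 : (1 / 2 : ℝ) • (p x + p u) - p u = (1 / 2 : ℝ) • (p x - p u) := by module
      have h2 : (1 / 2 : ℝ) • (p x + p u) - p x = (-(1 / 2) : ℝ) • (p x - p u) := by module
      rw [h1, h2]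
      simp only [inner_smul_left, inner_sub_right, conj_trivial]
      ring
    rw [Cl, hrow]
    exact Submodule.add_mem _ (Submodule.smul_mem _ _ hcl) (Submodule.smul_mem _ _ hzxB)
  have h4 : Ind q (insert s(z, u) B) :=
    (ind_insert_iff fun h => hncl (Cl.of_mem h)).2 ⟨hBind, hncl⟩
  refine LinearIndepOn.mono (h4.transfer hp) ?_
  rintro e (he | rfl | rfl | rfl | rfl)
  · exact Or.inr (Or.inl he)
  · exact Or.inr (Or.inr ⟨0, rfl⟩)
  · exact Or.inl rfl
  · exact Or.inr (Or.inr ⟨1, rfl⟩)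
  · exact Or.inr (Or.inr ⟨2, rfl⟩)

end OneExt

section RC
variable {V : Type*}

/-- At the configuration `p`, the pair set `E` is a circuit of the rigidity matroid that lives on
`S` and spans the complete graph on `S`: the edge set of a rigid circuit. -/
structure RC (p : V → E3) (E : Set (Sym2 V)) (S : Set V) : Prop where
  sub : E ⊆ K S
  dep : ¬ Ind p E
  ind : ∀ f ∈ E, Ind p (E \ {f})
  spans : Spans p E S

lemma RC.cl {p : V → E3} {E : Set (Sym2 V)} {S : Set V} (h : RC p E S) {f : Sym2 V}
    (hf : f ∈ E) : Cl p (E \ {f}) f := by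
  by_contra hcon
  have := (ind_insert_iff (F := E \ {f}) (by simp)).2 ⟨h.ind f hf, hcon⟩
  rw [Set.insert_sdiff_singleton, Set.insert_eq_of_mem hf] at this
  exact h.dep this

lemma RC.cl_diff {p : V → E3} {E : Set (Sym2 V)} {S : Set V} (h : RC p E S) {f e : Sym2 V}
    (hf : f ∈ E) (he : e ∈ E) : Cl p (E \ {f}) e := by
  by_cases hef : e = f
  · rw [hef]; exact h.cl hf
  · exact Cl.of_mem ⟨he, hef⟩

lemma RC.spans_diff {p : V → E3} {E : Set (Sym2 V)} {S : Set V} (h : RC p E S) {f : Sym2 V}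
    (hf : f ∈ E) : Spans p (E \ {f}) S :=
  fun u hu v hv => (h.spans u hu v hv).trans fun _ he => h.cl_diff hf he

lemma RC.ncard [Finite V] {p : V → E3} (hp : Generic p) {E : Set (Sym2 V)} {S : Finset V}
    (h : RC p E S) (hS : 3 ≤ S.card) {f : Sym2 V} (hf : f ∈ E) :
    (E \ {f}).ncard + 6 = 3 * S.card :=
  ncard_of_ind_spans hp hS (Set.sdiff_subset.trans h.sub) (h.ind f hf) (h.spans_diff hf)

/-- A 1-extension of a rigid circuit is a rigid circuit. Deleting an edge `xy` leaves a basis of the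
complete graph on `S`, three of the new pairs attach `z` to it, and the fourth creates the
dependency. Removing an old edge leaves a 1-extension, and removing a new pair leaves a 0-extension,
of an independent set. -/
lemma RC.oneExt [Finite V] {p : V → E3} (hp : Generic p) {E : Set (Sym2 V)} {S : Set V}
    (h : RC p E S) {z x y u v : V} (hz : z ∉ S) (hx : x ∈ S) (hy : y ∈ S) (hu : u ∈ S) (hv : v ∈ S)
    (hxy : x ≠ y) (hxu : x ≠ u) (hxv : x ≠ v) (hyu : y ≠ u) (hyv : y ≠ v) (huv : u ≠ v)
    (hE : s(x, y) ∈ E) :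
    RC p (E \ {s(x, y)} ∪ {s(z, x), s(z, y), s(z, u), s(z, v)}) (insert z S) := by
  have hne : ∀ w ∈ S, w ≠ z := fun w hw hh => hz (hh ▸ hw)
  have hzE : ∀ e ∈ E, z ∉ e := fun e he hze => hz (h.sub he z hze)
  have hzE' : ∀ e ∈ E \ {s(x, y)}, z ∉ e := fun e he => hzE e he.1
  have hx' := hne x hx
  have hy' := hne y hy
  have hu' := hne u hu
  have hv' := hne v hv
  have hI := h.ind _ hE
  have hsp := h.spans_diff hE
  have hspB : Spans p (E \ {s(x, y)} ∪ {s(z, x), s(z, y), s(z, u)}) (insert z S) :=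
    (hsp.mono Set.subset_union_left).insert hp hx hy hu hxy hxu hyu
      (Cl.of_mem (Or.inr (Or.inl rfl))) (Cl.of_mem (Or.inr (Or.inr (Or.inl rfl))))
      (Cl.of_mem (Or.inr (Or.inr (Or.inr rfl))))
  have hsub : E \ {s(x, y)} ∪ {s(z, x), s(z, y), s(z, u)} ⊆
      E \ {s(x, y)} ∪ {s(z, x), s(z, y), s(z, u), s(z, v)} := by
    refine Set.union_subset_union_right _ ?_
    rintro e (rfl | rfl | rfl) <;> simp
  refine ⟨?_, ?_, ?_, hspB.mono hsub⟩
  · refine Set.union_subset ((Set.sdiff_subset.trans h.sub).trans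
      (K_mono (Set.subset_insert _ _))) ?_
    rintro e (rfl | rfl | rfl | rfl) <;> rw [mk_mem_K] <;> simp [hx, hy, hu, hv]
  · intro hcon
    have hins : insert s(z, v) (E \ {s(x, y)} ∪ {s(z, x), s(z, y), s(z, u)}) ⊆
        E \ {s(x, y)} ∪ {s(z, x), s(z, y), s(z, u), s(z, v)} :=
      Set.insert_subset (by simp) hsub
    have hnot : s(z, v) ∉ E \ {s(x, y)} ∪ {s(z, x), s(z, y), s(z, u)} := by
      rintro (h1 | h1)
      · exact hzE' _ h1 (Sym2.mem_mk_left _ _)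
      · simp [hxv.symm, hyv.symm, huv.symm, hv'] at h1
    exact ((ind_insert_iff hnot).1 (LinearIndepOn.mono hcon hins)).2
      (hspB z (Set.mem_insert _ _) v (Set.mem_insert_of_mem _ hv))
  · rintro f (hf | rfl | rfl | rfl | rfl)
    · have hne' : s(x, y) ≠ f := fun hh => hf.2 hh.symm
      have h1 : insert s(x, y) ((E \ {f}) \ {s(x, y)}) = E \ {f} := by
        rw [Set.insert_sdiff_singleton,
          Set.insert_eq_of_mem (show s(x, y) ∈ E \ {f} from ⟨hE, hne'⟩)]
      refine LinearIndepOn.mono (Ind.oneExt (z := z) (y := u) (v := v) hp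
        (A := (E \ {f}) \ {s(x, y)}) (fun e he => hzE e he.1.1) hx' hy' hu' hv' hxy hxu hxv hyu
        hyv huv (by simp) (by rw [h1]; exact h.ind f hf.1)) ?_
      rintro e ⟨h1 | h1, h2⟩
      · exact Or.inl ⟨⟨h1.1, h2⟩, h1.2⟩
      · exact Or.inr h1
    · refine LinearIndepOn.mono (hI.zeroExt3 hp hzE' hy' hu' hv' hyu hyv huv) ?_
      rintro e ⟨h1 | rfl | h1, h2⟩
      exacts [Or.inl h1, absurd rfl h2, Or.inr h1]
    · refine LinearIndepOn.mono (hI.zeroExt3 hp hzE' hx' hu' hv' hxu hxv huv) ?_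
      rintro e ⟨h1 | rfl | rfl | h1, h2⟩
      exacts [Or.inl h1, Or.inr (Or.inl rfl), absurd rfl h2, Or.inr (Or.inr h1)]
    · refine LinearIndepOn.mono (hI.zeroExt3 hp hzE' hx' hy' hv' hxy hxv hyv) ?_
      rintro e ⟨h1 | rfl | rfl | rfl | h1, h2⟩
      exacts [Or.inl h1, Or.inr (Or.inl rfl), Or.inr (Or.inr (Or.inl rfl)), absurd rfl h2,
        Or.inr (Or.inr (Or.inr h1))]
    · refine LinearIndepOn.mono (hI.zeroExt3 hp hzE' hx' hy' hu' hxy hxu hyu) ?_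
      rintro e ⟨h1 | rfl | rfl | rfl | rfl, h2⟩
      exacts [Or.inl h1, Or.inr (Or.inl rfl), Or.inr (Or.inr (Or.inl rfl)),
        Or.inr (Or.inr (Or.inr rfl)), absurd rfl h2]

/-- The 1-extension of a 2-sum that deletes an edge `xy` of the first circuit, where `x` is not on
the shared edge `ab`, and joins the new vertex `z` to `x`, `y`, `v` and some `u` outside `S₁`. The
result is a basis of the complete graph on all vertices. Indeed, let `J` be the 2-sum with `xy`
replaced by `xu`. It spans: `E₂ - ab` spans `S₂`, so `ab` is available to `E₁ - xy`, which then
spans `S₁`, and the pair `xu` braces the two sides, which share `a` and `b`. As `J` has at most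
`3|S₁ ∪ S₂| - 6` elements, which is the rank, it is independent, and the graph is a 1-extension of
`J` deleting `xu`. -/
lemma twoSum_oneExt [Finite V] [DecidableEq V] {p : V → E3} (hp : Generic p)
    {E₁ E₂ : Set (Sym2 V)} {S₁ S₂ : Finset V} (h₁ : RC p E₁ S₁) (h₂ : RC p E₂ S₂)
    {a b x y u v z : V} (hab : a ≠ b) (hS : S₁ ∩ S₂ = {a, b}) (he₁ : s(a, b) ∈ E₁)
    (he₂ : s(a, b) ∈ E₂) (hf : s(x, y) ∈ E₁) (hxa : x ≠ a) (hxb : x ≠ b) (hu₂ : u ∈ S₂)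
    (hu₁ : u ∉ S₁) (hv : v ∈ S₁ ∪ S₂) (hz : z ∉ S₁ ∪ S₂)
    (hxy : x ≠ y) (hxv : x ≠ v) (hyv : y ≠ v) (huv : u ≠ v) {F : Set (Sym2 V)}
    (hF : F = (E₁ \ {s(a, b)}) \ {s(x, y)} ∪ E₂ \ {s(a, b)} ∪
      {s(z, x), s(z, u), s(z, y), s(z, v)}) :
    Ind p F ∧ Spans p F (insert z (S₁ ∪ S₂) : Finset V) ∧
      F.ncard + 6 = 3 * (insert z (S₁ ∪ S₂)).card := by
  have hmem : ∀ w, w ∈ S₁ → w ∈ S₂ → w = a ∨ w = b := fun w h1 h2 => by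
    have : w ∈ S₁ ∩ S₂ := Finset.mem_inter.2 ⟨h1, h2⟩
    rw [hS] at this
    simpa using this
  have haS : a ∈ S₁ ∩ S₂ := by rw [hS]; simp
  have hbS : b ∈ S₁ ∩ S₂ := by rw [hS]; simp
  obtain ⟨ha₁, ha₂⟩ := Finset.mem_inter.1 haS
  obtain ⟨hb₁, hb₂⟩ := Finset.mem_inter.1 hbS
  have hx₁ : x ∈ S₁ := h₁.sub hf x (Sym2.mem_mk_left _ _)
  have hy₁ : y ∈ S₁ := h₁.sub hf y (Sym2.mem_mk_right _ _)
  have hx₂ : x ∉ S₂ := fun h => (hmem x hx₁ h).elim hxa hxb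
  have hne₁ : ∀ w ∈ S₁, w ≠ u := fun w hw hh => hu₁ (hh ▸ hw)
  have hxu : x ≠ u := hne₁ x hx₁
  have huy : u ≠ y := (hne₁ y hy₁).symm
  have hne : ∀ w ∈ S₁ ∪ S₂, w ≠ z := fun w hw hh => hz (hh ▸ hw)
  have hx' : x ≠ z := hne x (Finset.mem_union_left _ hx₁)
  have hy' : y ≠ z := hne y (Finset.mem_union_left _ hy₁)
  have hu' : u ≠ z := hne u (Finset.mem_union_right _ hu₂)
  have hv' : v ≠ z := hne v hv
  have hS1c : 3 ≤ S₁.card := by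
    rw [← Finset.card_eq_three.2 ⟨x, a, b, hxa, hxb, hab, rfl⟩]
    refine Finset.card_le_card ?_
    simp [Finset.insert_subset_iff, *]
  have hS2c : 3 ≤ S₂.card := by
    rw [← Finset.card_eq_three.2 ⟨u, a, b, (hne₁ a ha₁).symm, (hne₁ b hb₁).symm, hab, rfl⟩]
    refine Finset.card_le_card ?_
    simp [Finset.insert_subset_iff, *]
  have hUc : (S₁ ∪ S₂).card + 2 = S₁.card + S₂.card := by
    rw [← Finset.card_union_add_card_inter, hS, Finset.card_pair hab]
  set A : Set (Sym2 V) := (E₁ \ {s(a, b)}) \ {s(x, y)} ∪ E₂ \ {s(a, b)} with hA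
  set J : Set (Sym2 V) := insert s(x, u) A with hJ
  have hAK : A ⊆ K ((S₁ ∪ S₂ : Finset V) : Set V) := by
    rintro e (he | he)
    · exact K_mono (by simp) (h₁.sub he.1.1)
    · exact K_mono (by simp) (h₂.sub he.1)
  have hJK : J ⊆ K ((S₁ ∪ S₂ : Finset V) : Set V) :=
    Set.insert_subset (mk_mem_K.2 ⟨by simp [hx₁], by simp [hu₂]⟩) hAK
  have hnot : s(x, u) ∉ A := by
    rintro (he | he)
    · exact hu₁ (h₁.sub he.1.1 u (Sym2.mem_mk_right _ _))
    · exact hx₂ (h₂.sub he.1 x (Sym2.mem_mk_left _ _))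
  have sp₂ : Spans p J S₂ := (h₂.spans_diff he₂).mono
    (Set.subset_union_right.trans (Set.subset_insert _ _))
  have sp₁ : Spans p J S₁ := by
    intro c hc d hd
    refine (h₁.spans_diff hf c hc d hd).trans fun e he => ?_
    by_cases hee : e = s(a, b)
    · rw [hee]; exact sp₂ a ha₂ b hb₂
    · exact Cl.of_mem (Or.inr (Or.inl ⟨⟨he.1, hee⟩, he.2⟩))
  have spu : Spans p J (insert u (S₁ : Set V)) :=
    sp₁.insert hp (Finset.mem_coe.2 ha₁) (Finset.mem_coe.2 hb₁) (Finset.mem_coe.2 hx₁) hab hxa.symm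
      hxb.symm (sp₂ u hu₂ a ha₂) (sp₂ u hu₂ b hb₂) (Cl.swap (Cl.of_mem (Or.inl rfl)))
  -- Every vertex of `S₂` sees the triple `a, b, u`.
  have spw : ∀ w ∈ S₂, Spans p J (insert w (insert u (S₁ : Set V))) := fun w hw =>
    spu.insert hp (Set.mem_insert_of_mem _ (Finset.mem_coe.2 ha₁))
      (Set.mem_insert_of_mem _ (Finset.mem_coe.2 hb₁)) (Set.mem_insert _ _) hab (hne₁ a ha₁)
      (hne₁ b hb₁) (sp₂ w hw a ha₂) (sp₂ w hw b hb₂) (sp₂ w hw u hu₂)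
  have spJ : Spans p J ((S₁ ∪ S₂ : Finset V) : Set V) := by
    have key : ∀ c ∈ S₁, ∀ d ∈ S₂, Cl p J s(d, c) := fun c hc d hd =>
      spw d hd d (Set.mem_insert _ _) c
        (Set.mem_insert_of_mem _ (Set.mem_insert_of_mem _ (Finset.mem_coe.2 hc)))
    intro c hc d hd
    rcases Finset.mem_union.1 (Finset.mem_coe.1 hc) with hc | hc <;>
      rcases Finset.mem_union.1 (Finset.mem_coe.1 hd) with hd | hd
    exacts [sp₁ c hc d hd, (key c hc d hd).swap, key d hd c hc, sp₂ c hc d hd]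
  have hc₁ := h₁.ncard hp hS1c he₁
  have hc₂ := h₂.ncard hp hS2c he₂
  have hfe : s(x, y) ∈ E₁ \ {s(a, b)} := by
    refine ⟨hf, fun hh => ?_⟩
    have : x ∈ s(a, b) := by
      rw [← Set.mem_singleton_iff.1 hh]; exact Sym2.mem_mk_left _ _
    rw [Sym2.mem_iff] at this
    exact this.elim hxa hxb
  have hc₃ := Set.ncard_sdiff_singleton_add_one hfe (Set.toFinite _)
  have hAc : A.ncard ≤ ((E₁ \ {s(a, b)}) \ {s(x, y)}).ncard + (E₂ \ {s(a, b)}).ncard :=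
    Set.ncard_union_le _ _
  have hJc : J.ncard = A.ncard + 1 := Set.ncard_insert_of_notMem hnot (Set.toFinite _)
  have hUc3 : 3 ≤ (S₁ ∪ S₂).card := hS1c.trans (Finset.card_le_card Finset.subset_union_left)
  have hJI : Ind p J := ind_of_spans_ncard hp hUc3 hJK spJ (by omega)
  have hJn := ncard_of_ind_spans hp hUc3 hJK hJI spJ
  have hzA : ∀ e ∈ A, z ∉ e := fun e he hze => hz (Finset.mem_coe.1 (hAK he z hze))
  have hFI : Ind p F := by
    rw [hF]
    exact Ind.oneExt hp hzA hx' hu' hy' hv' hxu hxy hxv huy huv hyv hnot hJI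
  have hFc : F.ncard = A.ncard + 4 := by
    have h4 : ({s(z, x), s(z, u), s(z, y), s(z, v)} : Set (Sym2 V)).ncard = 4 := by
      rw [Set.ncard_insert_of_notMem, Set.ncard_insert_of_notMem, Set.ncard_pair] <;>
        simp [hxu, hxy, hxv, huy, huv, hyv, hu', hx', hy']
    rw [hF, Set.ncard_union_eq ?_ (Set.toFinite _) (Set.toFinite _), h4]
    rw [Set.disjoint_right]
    rintro e (rfl | rfl | rfl | rfl) he <;> exact hzA _ he (Sym2.mem_mk_left _ _)
  have hcard : (insert z (S₁ ∪ S₂)).card = (S₁ ∪ S₂).card + 1 := Finset.card_insert_of_notMem hz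
  have hFK : F ⊆ K ((insert z (S₁ ∪ S₂) : Finset V) : Set V) := by
    rw [hF]
    refine Set.union_subset (hAK.trans (K_mono (by
      rw [Finset.coe_subset]; exact Finset.subset_insert _ _))) ?_
    have hv2 := Finset.mem_union.1 hv
    rintro e (rfl | rfl | rfl | rfl) <;> rw [mk_mem_K] <;> simp [hx₁, hu₂, hy₁, hv2]
  have hfin : F.ncard + 6 = 3 * (insert z (S₁ ∪ S₂)).card := by omega
  exact ⟨hFI, spans_of_ind_ncard hp (by omega) hFK hFI hfin, hfin⟩

end RC

/-! ### The dichotomy for graphs -/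

section Main
variable {V N : Type*}

lemma image_edgeSet_induce (H : SimpleGraph V) (S : Finset V) (f : V → N) :
    Sym2.map (fun w : (S : Set V) => f w) '' (H.induce (S : Set V)).edgeSet =
      Sym2.map f '' (H.edgeSet ∩ K S) := by
  ext e
  constructor
  · rintro ⟨e, he, rfl⟩
    induction e using Sym2.ind with
    | _ c d => exact ⟨s(c, d), ⟨he, mk_mem_K.2 ⟨c.2, d.2⟩⟩, rfl⟩
  · rintro ⟨e, ⟨he, hK⟩, rfl⟩
    induction e using Sym2.ind with
    | _ c d =>
      rw [mk_mem_K] at hK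
      exact ⟨s(⟨c, hK.1⟩, ⟨d, hK.2⟩), he, rfl⟩

/-- The subgraph induced on `S` is a rigid circuit iff its image under an embedding `f` is one at
one generic configuration. -/
lemma rc_iff [Fintype V] {f : V → N} (hf : Function.Injective f) {p : N → E3} (hp : Generic p)
    (H : SimpleGraph V) (S : Finset V) :
    (IsRigidGraph 3 (H.induce (S : Set V)) ∧ IsCircuitGraph 3 (H.induce (S : Set V))) ↔
      RC p (Sym2.map f '' (H.edgeSet ∩ K S)) (f '' S) := by
  have hg : Function.Injective (fun w : (S : Set V) => f w) := hf.comp Subtype.val_injective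
  rw [isRigidGraph_iff_map hg hp, isCircuitGraph_iff_map hg hp, image_edgeSet_induce]
  constructor
  · rintro ⟨h1, h2, h3⟩
    refine ⟨?_, h2, h3, ?_⟩
    · rintro _ ⟨e, ⟨-, he⟩, rfl⟩ w hw
      obtain ⟨w', hw', rfl⟩ := Sym2.mem_map.1 hw
      exact ⟨w', he w' hw', rfl⟩
    · rintro _ ⟨c, hc, rfl⟩ _ ⟨d, hd, rfl⟩
      exact h1 ⟨c, hc⟩ ⟨d, hd⟩
  · intro h
    exact ⟨fun c d => h.spans _ ⟨c, c.2, rfl⟩ _ ⟨d, d.2, rfl⟩, h.dep, h.ind⟩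

lemma map_some_mem_K {e : Sym2 V} {S : Finset V} :
    e.map some ∈ K ((S.map Function.Embedding.some : Finset (Option V)) : Set (Option V)) ↔
      e ∈ K (S : Set V) := by
  induction e using Sym2.ind with
  | _ c d =>
    rw [Sym2.map_mk, mk_mem_K, mk_mem_K]
    simp

lemma map_some_mem_K_insert [DecidableEq V] {e : Sym2 V} {S : Finset V} :
    e.map some ∈ K ((insert none (S.map Function.Embedding.some) : Finset (Option V)) :
      Set (Option V)) ↔ e ∈ K (S : Set V) := by
  induction e using Sym2.ind with
  | _ c d =>
    rw [Sym2.map_mk, mk_mem_K, mk_mem_K]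
    simp

lemma singleton_map_some (c d : V) :
    ({s(some c, some d)} : Set (Sym2 (Option V))) = Sym2.map some '' {s(c, d)} :=
  (Set.image_singleton (f := Sym2.map some) (a := s(c, d))).symm

variable [Fintype V] [DecidableEq V] {H : SimpleGraph V} {S₁ S₂ : Finset V} {a b x y u v : V}
  {G' : SimpleGraph (Option V)}

/-- If the new vertex is joined to some `u` outside the side `S₁` containing the deleted edge `xy`,
and `x` is not on the shared edge `ab`, the result is minimally 3-rigid. -/
lemma minimallyRigid_of_joined_other_side (hadj : H.Adj a b)
    (hU : S₁ ∪ S₂ = Finset.univ) (hI : S₁ ∩ S₂ = {a, b})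
    (hcov : ∀ u v, H.Adj u v → (u ∈ S₁ ∧ v ∈ S₁) ∨ (u ∈ S₂ ∧ v ∈ S₂))
    (h₁ : IsRigidGraph 3 (H.induce (S₁ : Set V)) ∧ IsCircuitGraph 3 (H.induce (S₁ : Set V)))
    (h₂ : IsRigidGraph 3 (H.induce (S₂ : Set V)) ∧ IsCircuitGraph 3 (H.induce (S₂ : Set V)))
    (hxy : H.Adj x y) (hx : x ∈ S₁) (hy : y ∈ S₁) (hxa : x ≠ a) (hxb : x ≠ b)
    (hu : u ∉ S₁) (hxv : x ≠ v) (hyv : y ≠ v) (huv : u ≠ v)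
    (hG' : G'.edgeSet = Sym2.map some '' ((H.edgeSet \ {s(a, b)}) \ {s(x, y)}) ∪
      {s(none, some x), s(none, some u), s(none, some y), s(none, some v)}) :
    IsRigidGraph 3 G' ∧ G'.edgeSet.ncard = 3 * Fintype.card (Option V) - 6 := by
  obtain ⟨p, hp⟩ := exists_generic (Option V)
  have hs : Function.Injective (some : V → Option V) := Option.some_injective V
  have hms : Function.Injective (Sym2.map (some : V → Option V)) := Sym2.map.injective hs
  have r₁ := (rc_iff hs hp H S₁).1 h₁
  have r₂ := (rc_iff hs hp H S₂).1 h₂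
  have hco : ∀ S : Finset V, some '' (S : Set V) =
      ((S.map Function.Embedding.some : Finset (Option V)) : Set (Option V)) := fun S => by
    rw [Finset.coe_map]; rfl
  rw [hco] at r₁ r₂
  have habI : a ∈ S₁ ∩ S₂ ∧ b ∈ S₁ ∩ S₂ := by rw [hI]; simp
  simp only [Finset.mem_inter] at habI
  have hu₂ : u ∈ S₂ := by
    have : u ∈ S₁ ∪ S₂ := hU ▸ Finset.mem_univ u
    exact (Finset.mem_union.1 this).resolve_left hu
  have hx₂ : x ∉ S₂ := fun h => by
    have : x ∈ S₁ ∩ S₂ := Finset.mem_inter.2 ⟨hx, h⟩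
    rw [hI] at this
    simp [hxa, hxb] at this
  have hF : Sym2.map some '' ((H.edgeSet \ {s(a, b)}) \ {s(x, y)}) =
      (Sym2.map some '' (H.edgeSet ∩ K (S₁ : Set V)) \ {s(some a, some b)}) \
        {s(some x, some y)} ∪
      Sym2.map some '' (H.edgeSet ∩ K (S₂ : Set V)) \ {s(some a, some b)} := by
    rw [singleton_map_some a b, singleton_map_some x y, ← Set.image_sdiff hms,
      ← Set.image_sdiff hms, ← Set.image_sdiff hms,
      ← Set.image_union]
    congr 1
    ext e
    constructor
    · rintro ⟨⟨he, h1⟩, h2⟩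
      induction e using Sym2.ind with
      | _ c d =>
        exact (hcov c d he).imp (fun h => ⟨⟨⟨he, mk_mem_K.2 h⟩, h1⟩, h2⟩)
          (fun h => ⟨⟨he, mk_mem_K.2 h⟩, h1⟩)
    · rintro (⟨⟨⟨he, -⟩, h1⟩, h2⟩ | ⟨⟨he, hK⟩, h1⟩)
      · exact ⟨⟨he, h1⟩, h2⟩
      · refine ⟨⟨he, h1⟩, ?_⟩
        rintro rfl
        exact hx₂ (hK x (Sym2.mem_mk_left _ _))
  obtain ⟨-, hsp, hc⟩ := twoSum_oneExt (a := some a) (b := some b) (x := some x) (y := some y)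
    (u := some u) (v := some v) (z := none) hp r₁ r₂ (by simpa using hadj.ne)
    (by rw [← Finset.map_inter, hI]; simp)
    ⟨s(a, b), ⟨hadj, mk_mem_K.2 ⟨habI.1.1, habI.2.1⟩⟩, rfl⟩
    ⟨s(a, b), ⟨hadj, mk_mem_K.2 ⟨habI.1.2, habI.2.2⟩⟩, rfl⟩
    ⟨s(x, y), ⟨hxy, mk_mem_K.2 ⟨hx, hy⟩⟩, rfl⟩ (by simpa using hxa) (by simpa using hxb)
    (by simpa using hu₂) (by simpa using hu)
    (by rw [← Finset.map_union, hU]; simp) (by simp) (by simpa using hxy.ne)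
    (by simpa using hxv) (by simpa using hyv) (by simpa using huv)
    (F := G'.edgeSet) (by rw [hG', hF])
  have huniv : insert none (S₁.map Function.Embedding.some ∪ S₂.map Function.Embedding.some) =
      (Finset.univ : Finset (Option V)) := by
    rw [← Finset.map_union, hU]
    ext w
    cases w <;> simp
  rw [huniv] at hsp hc
  rw [Finset.card_univ] at hc
  refine ⟨(isRigidGraph_iff hp G').2 fun c d => hsp c (by simp) d (by simp), by omega⟩

/-- If the new vertex is joined only to vertices of the side `S₁` containing the deleted edge,
the result is the 2-sum of the 1-extended circuit on `S₁` with the circuit on `S₂`. -/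
lemma isTwoSum_of_joined_same_side (hadj : H.Adj a b) (hU : S₁ ∪ S₂ = Finset.univ) (hI : S₁ ∩ S₂ = {a, b})
    (hcov : ∀ u v, H.Adj u v → (u ∈ S₁ ∧ v ∈ S₁) ∨ (u ∈ S₂ ∧ v ∈ S₂))
    (h₁ : IsRigidGraph 3 (H.induce (S₁ : Set V)) ∧ IsCircuitGraph 3 (H.induce (S₁ : Set V)))
    (h₂ : IsRigidGraph 3 (H.induce (S₂ : Set V)) ∧ IsCircuitGraph 3 (H.induce (S₂ : Set V)))
    (hxy : H.Adj x y) (hne : s(x, y) ≠ s(a, b)) (hx : x ∈ S₁) (hy : y ∈ S₁) (hu : u ∈ S₁)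
    (hv : v ∈ S₁) (hxu : x ≠ u) (hyu : y ≠ u) (hxv : x ≠ v) (hyv : y ≠ v) (huv : u ≠ v)
    (hG' : G'.edgeSet = Sym2.map some '' ((H.edgeSet \ {s(a, b)}) \ {s(x, y)}) ∪
      {s(none, some x), s(none, some y), s(none, some u), s(none, some v)}) :
    IsTwoSumOfRigid3Circuits G' := by
  obtain ⟨p, hp⟩ := exists_generic (Option V)
  have hs : Function.Injective (some : V → Option V) := Option.some_injective V
  have hms : Function.Injective (Sym2.map (some : V → Option V)) := Sym2.map.injective hs
  have r₁ := (rc_iff hs hp H S₁).1 h₁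
  have r₂ := (rc_iff hs hp H S₂).1 h₂
  have habI : a ∈ S₁ ∩ S₂ ∧ b ∈ S₁ ∩ S₂ := by rw [hI]; simp
  simp only [Finset.mem_inter] at habI
  have hxyK : s(x, y) ∉ K (S₂ : Set V) := fun h => by
    rw [mk_mem_K] at h
    have h1 : x ∈ S₁ ∩ S₂ := Finset.mem_inter.2 ⟨hx, h.1⟩
    have h2 : y ∈ S₁ ∩ S₂ := Finset.mem_inter.2 ⟨hy, h.2⟩
    have h3 := hxy.ne
    rw [hI] at h1 h2
    simp only [Finset.mem_insert, Finset.mem_singleton] at h1 h2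
    rcases h1 with rfl | rfl <;> rcases h2 with rfl | rfl
    exacts [h3 rfl, hne rfl, hne Sym2.eq_swap, h3 rfl]
  set Z : Set (Sym2 (Option V)) :=
    {s(none, some x), s(none, some y), s(none, some u), s(none, some v)} with hZ
  have hZn : ∀ e ∈ Z, none ∈ e := by
    rintro e (rfl | rfl | rfl | rfl) <;> exact Sym2.mem_mk_left _ _
  let H' : SimpleGraph (Option V) := G' ⊔ SimpleGraph.fromEdgeSet {s(some a, some b)}
  have hH' : H'.edgeSet = Sym2.map some '' (H.edgeSet \ {s(x, y)}) ∪ Z := by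
    have h1 : H'.edgeSet = G'.edgeSet ∪ {s(some a, some b)} := by
      rw [SimpleGraph.edgeSet_sup, SimpleGraph.edgeSet_fromEdgeSet]
      congr 1
      rw [sdiff_eq_left, Set.disjoint_singleton_left]
      simpa using hadj.ne
    rw [h1, hG', Set.union_right_comm, singleton_map_some a b,
      ← Set.image_union, sdiff_right_comm, Set.sdiff_union_of_subset]
    rw [Set.singleton_subset_iff]
    exact ⟨hadj, hne.symm⟩
  have hnG : s(some a, some b) ∉ G'.edgeSet := by
    rw [hG']
    rintro (⟨e, ⟨⟨-, h1⟩, -⟩, he⟩ | h)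
    · rw [← Sym2.map_mk some a b] at he
      exact h1 (hms he)
    · have := hZn _ h
      simp at this
  have hE₁ : H'.edgeSet ∩ K ((insert none (S₁.map Function.Embedding.some) : Finset (Option V)) :
      Set (Option V)) =
      Sym2.map some '' (H.edgeSet ∩ K (S₁ : Set V)) \ {s(some x, some y)} ∪ Z := by
    rw [hH', Set.union_inter_distrib_right]
    congr 1
    · rw [singleton_map_some x y, ← Set.image_sdiff hms]
      ext e
      constructor
      · rintro ⟨⟨e, he, rfl⟩, hK⟩
        exact ⟨e, ⟨⟨he.1, map_some_mem_K_insert.1 hK⟩, he.2⟩, rfl⟩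
      · rintro ⟨e, ⟨⟨he, hK⟩, h2⟩, rfl⟩
        exact ⟨⟨e, ⟨he, h2⟩, rfl⟩, map_some_mem_K_insert.2 hK⟩
    · rw [Set.inter_eq_left]
      rintro e (rfl | rfl | rfl | rfl) <;> rw [mk_mem_K] <;> simp [hx, hy, hu, hv]
  have hE₂ : H'.edgeSet ∩ K ((S₂.map Function.Embedding.some : Finset (Option V)) :
      Set (Option V)) = Sym2.map some '' (H.edgeSet ∩ K (S₂ : Set V)) := by
    rw [hH']
    ext e
    constructor
    · rintro ⟨⟨e, he, rfl⟩ | h, hK⟩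
      · exact ⟨e, ⟨he.1, map_some_mem_K.1 hK⟩, rfl⟩
      · have := hK _ (hZn e h)
        simp at this
    · rintro ⟨e, ⟨he, hK⟩, rfl⟩
      refine ⟨Or.inl ⟨e, ⟨he, ?_⟩, rfl⟩, map_some_mem_K.2 hK⟩
      rintro rfl
      exact hxyK hK
  have c₁ := r₁.oneExt (z := none) (x := some x) (y := some y) (u := some u) (v := some v) hp
    (by simp) ⟨x, hx, rfl⟩ ⟨y, hy, rfl⟩ ⟨u, hu, rfl⟩ ⟨v, hv, rfl⟩ (by simpa using hxy.ne)
    (by simpa using hxu) (by simpa using hxv) (by simpa using hyu) (by simpa using hyv)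
    (by simpa using huv) ⟨s(x, y), ⟨hxy, mk_mem_K.2 ⟨hx, hy⟩⟩, rfl⟩
  have k₁ := (rc_iff Function.injective_id hp H' (insert none (S₁.map Function.Embedding.some))).2
    (by
      rw [Sym2.map_id, Set.image_id, Set.image_id, hE₁, Finset.coe_insert, Finset.coe_map]
      exact c₁)
  have k₂ := (rc_iff Function.injective_id hp H' (S₂.map Function.Embedding.some)).2
    (by
      rw [Sym2.map_id, Set.image_id, Set.image_id, hE₂, Finset.coe_map]
      exact r₂)
  refine ⟨H', insert none (S₁.map Function.Embedding.some), S₂.map Function.Embedding.some,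
    some a, some b, by simpa using hadj.ne, ?_, ?_, ?_, ?_, k₁.1, k₁.2, k₂.1, k₂.2, ?_⟩
  · rw [← SimpleGraph.mem_edgeSet, hH']
    exact Or.inl ⟨s(a, b), ⟨hadj, hne.symm⟩, rfl⟩
  · rw [Finset.insert_union, ← Finset.map_union, hU]
    ext w
    cases w <;> simp
  · rw [Finset.insert_inter_of_notMem (by simp), ← Finset.map_inter, hI]
    simp
  · intro c d hcd
    rw [← SimpleGraph.mem_edgeSet, hH'] at hcd
    rw [← Finset.mem_coe, ← Finset.mem_coe, ← Finset.mem_coe, ← Finset.mem_coe, ← mk_mem_K,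
      ← mk_mem_K]
    rcases hcd with ⟨e, he, hee⟩ | h
    · rw [← hee, map_some_mem_K_insert, map_some_mem_K]
      induction e using Sym2.ind with
      | _ c d =>
        rw [mk_mem_K, mk_mem_K]
        exact hcov c d he.1
    · left
      rcases h with h | h | h | h <;> rw [h, mk_mem_K] <;> simp [hx, hy, hu, hv]
  · refine SimpleGraph.edgeSet_injective ?_
    rw [SimpleGraph.edgeSet_deleteEdges]
    have h1 : H'.edgeSet = G'.edgeSet ∪ {s(some a, some b)} := by
      rw [SimpleGraph.edgeSet_sup, SimpleGraph.edgeSet_fromEdgeSet]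
      congr 1
      rw [sdiff_eq_left, Set.disjoint_singleton_left]
      simpa using hadj.ne
    rw [h1, Set.union_sdiff_right, Set.sdiff_singleton_eq_self hnG]

/-- The dichotomy when the deleted edge lies in `S₁`. -/
lemma oneExtension_of_edge_in_side (hadj : H.Adj a b) (hU : S₁ ∪ S₂ = Finset.univ) (hI : S₁ ∩ S₂ = {a, b})
    (hcov : ∀ u v, H.Adj u v → (u ∈ S₁ ∧ v ∈ S₁) ∨ (u ∈ S₂ ∧ v ∈ S₂))
    (h₁ : IsRigidGraph 3 (H.induce (S₁ : Set V)) ∧ IsCircuitGraph 3 (H.induce (S₁ : Set V)))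
    (h₂ : IsRigidGraph 3 (H.induce (S₂ : Set V)) ∧ IsCircuitGraph 3 (H.induce (S₂ : Set V)))
    (hxy : H.Adj x y) (hne : s(x, y) ≠ s(a, b)) (hx : x ∈ S₁) (hy : y ∈ S₁)
    (hxu : x ≠ u) (hyu : y ≠ u) (hxv : x ≠ v) (hyv : y ≠ v) (huv : u ≠ v)
    (hG' : G'.edgeSet = Sym2.map some '' ((H.edgeSet \ {s(a, b)}) \ {s(x, y)}) ∪
      {s(none, some x), s(none, some y), s(none, some u), s(none, some v)}) :
    (IsRigidGraph 3 G' ∧ G'.edgeSet.ncard = 3 * Fintype.card (Option V) - 6) ∨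
      IsTwoSumOfRigid3Circuits G' := by
  by_cases huS : u ∈ S₁
  · by_cases hvS : v ∈ S₁
    · exact Or.inr (isTwoSum_of_joined_same_side hadj hU hI hcov h₁ h₂ hxy hne hx hy huS hvS hxu hyu hxv hyv huv hG')
    left
    by_cases hxab : x ≠ a ∧ x ≠ b
    · refine minimallyRigid_of_joined_other_side hadj hU hI hcov h₁ h₂ hxy hx hy hxab.1 hxab.2 hvS hxu hyu huv.symm ?_
      rw [hG']
      congr 1
      grind
    -- As `xy` is not the shared edge, an end of it avoids `a` and `b`.
    · have hyab : y ≠ a ∧ y ≠ b := by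
        have := hxy.ne
        constructor <;> rintro rfl <;> simp_all
      refine minimallyRigid_of_joined_other_side hadj hU hI hcov h₁ h₂ hxy.symm hy hx hyab.1 hyab.2 hvS hyu hxu huv.symm ?_
      rw [hG', Sym2.eq_swap (a := x) (b := y)]
      congr 1
      grind
  · left
    by_cases hxab : x ≠ a ∧ x ≠ b
    · refine minimallyRigid_of_joined_other_side hadj hU hI hcov h₁ h₂ hxy hx hy hxab.1 hxab.2 huS hxv hyv huv ?_
      rw [hG']
      congr 1
      grind
    · have hyab : y ≠ a ∧ y ≠ b := by
        have := hxy.ne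
        constructor <;> rintro rfl <;> simp_all
      refine minimallyRigid_of_joined_other_side hadj hU hI hcov h₁ h₂ hxy.symm hy hx hyab.1 hyab.2 huS hyv hxv huv ?_
      rw [hG', Sym2.eq_swap (a := x) (b := y)]
      congr 1
      grind

end Main

/-- Let G be the 2-sum of two 3-rigid 3-circuits.  If G' is obtained from G
by a 3-dimensional 1-extension, then either G' is minimally 3-rigid (3-rigid with exactly
3|V(G')| - 6 edges), or G' is the 2-sum of two 3-rigid 3-circuits. -/
theorem one_extension_of_two_sum {V : Type*} [Fintype V] [DecidableEq V]
    (G : SimpleGraph V) (hG : IsTwoSumOfRigid3Circuits G)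
    (G' : SimpleGraph (Option V)) (hext : IsOneExtension 3 G G') :
    (IsRigidGraph 3 G' ∧ G'.edgeSet.ncard = 3 * Fintype.card (Option V) - 6) ∨
      IsTwoSumOfRigid3Circuits G' := by
  obtain ⟨H, S₁, S₂, a, b, hab, hadj, hU, hI, hcov, r₁, c₁, r₂, c₂, rfl⟩ := hG
  obtain ⟨x, y, D, hxy, hxD, hyD, hD, hs, hn⟩ := hext
  obtain ⟨u, v, huv, rfl⟩ := Finset.card_eq_two.1 hD
  simp only [Finset.mem_insert, Finset.mem_singleton, not_or] at hxD hyD hn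
  rw [SimpleGraph.deleteEdges_adj, Set.mem_singleton_iff] at hxy
  have hG' : G'.edgeSet = Sym2.map some '' ((H.edgeSet \ {s(a, b)}) \ {s(x, y)}) ∪
      {s(none, some x), s(none, some y), s(none, some u), s(none, some v)} := by
    have hms : Function.Injective (Sym2.map (some : V → Option V)) :=
      Sym2.map.injective (Option.some_injective V)
    have hnone : ∀ w, G'.Adj none (some w) ↔ s(none, some w) ∈
        Sym2.map some '' ((H.edgeSet \ {s(a, b)}) \ {s(x, y)}) ∪
        {s(none, some x), s(none, some y), s(none, some u), s(none, some v)} := by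
      intro w
      rw [SimpleGraph.adj_comm, hn, Set.mem_union]
      have : s(none, some w) ∉ Sym2.map some '' ((H.edgeSet \ {s(a, b)}) \ {s(x, y)}) := by
        rintro ⟨e, -, he⟩
        have h1 : (none : Option V) ∈ Sym2.map some e := by
          rw [he]; exact Sym2.mem_mk_left _ _
        simp [Sym2.mem_map] at h1
      simp [this]
    ext e
    induction e using Sym2.ind with
    | _ c d =>
      rw [SimpleGraph.mem_edgeSet]
      cases c with
      | none =>
        cases d with
        | none =>
          refine iff_of_false (G'.loopless.irrefl _) ?_
          rintro (⟨e, -, he⟩ | h)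
          · have h1 : (none : Option V) ∈ Sym2.map some e := by
              rw [he]; exact Sym2.mem_mk_left _ _
            simp [Sym2.mem_map] at h1
          · simp at h
        | some d => exact hnone d
      | some c =>
        cases d with
        | none => rw [SimpleGraph.adj_comm, Sym2.eq_swap (a := some c)]; exact hnone c
        | some d =>
          rw [hs, ← Sym2.map_mk some c d, Set.mem_union, hms.mem_set_image]
          simp
  rcases hcov x y hxy.1 with h | h
  · exact oneExtension_of_edge_in_side hadj hU hI hcov ⟨r₁, c₁⟩ ⟨r₂, c₂⟩ hxy.1 hxy.2 h.1 h.2 hxD.1 hyD.1 hxD.2 hyD.2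
      huv hG'
  · exact oneExtension_of_edge_in_side hadj (Finset.union_comm S₁ S₂ ▸ hU) (Finset.inter_comm S₁ S₂ ▸ hI)
      (fun c d hcd => (hcov c d hcd).symm) ⟨r₂, c₂⟩ ⟨r₁, c₁⟩ hxy.1 hxy.2 h.1 h.2 hxD.1 hyD.1
      hxD.2 hyD.2 huv hG'
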